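/- arXiv:1604.08713 — 2 statements merged into one kernel-verified Lean document; each statement's English description precedes it below -/
import Mathlib

section
/- For every dimension d ∈ ℕ there exists a constant c_d > 0 with the following property: for every infinite sequence S in [0,1)^d one has ‖D_S^N | bmo^d‖ ≥ c_d · N^{−1} (log N)^{d/2} for infinitely many N ∈ ℕ. -/
open MeasureTheory
open scoped ENNReal

noncomputable section

/-- The closed unit cube `[0,1]^d`. -/
def unitCube (d : ℕ) : Set (Fin d → ℝ) := Set.univ.pi fun _ => Set.Icc (0:ℝ) 1

/-- The half-open unit cube `[0,1)^d`. -/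
def unitCubeIco (d : ℕ) : Set (Fin d → ℝ) := Set.univ.pi fun _ => Set.Ico (0:ℝ) 1

/-- Discrepancy function of the first `N` points of the sequence `S` in `[0,1)^d`. -/
def discSeq (d : ℕ) (S : ℕ → Fin d → ℝ) (N : ℕ) (x : Fin d → ℝ) : ℝ :=
  (Nat.card {k : Fin N // ∀ i, S k i < x i} : ℝ) / N - ∏ i, x i

/-- One-dimensional Haar function `h_{j,m}`, with `h_{-1,0} = 1_{[0,1)}`. -/
def haar1 (j : ℤ) (m : ℕ) (x : ℝ) : ℝ :=
  if j = -1 then (if 0 ≤ x ∧ x < 1 then 1 else 0)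
  else if (m:ℝ)/2^j.toNat ≤ x ∧ x < ((m:ℝ) + 1/2)/2^j.toNat then 1
  else if ((m:ℝ) + 1/2)/2^j.toNat ≤ x ∧ x < ((m:ℝ)+1)/2^j.toNat then -1
  else 0

/-- `d`-dimensional (tensor product) Haar function. -/
def haarFn (d : ℕ) (j : Fin d → ℤ) (m : Fin d → ℕ) (x : Fin d → ℝ) : ℝ :=
  ∏ i, haar1 (j i) (m i) (x i)

/-- Haar coefficient `⟨f, h_{j,m}⟩`. -/
def haarCoeff (d : ℕ) (f : (Fin d → ℝ) → ℝ) (j : Fin d → ℤ) (m : Fin d → ℕ) : ℝ :=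
  ∫ x in unitCube d, f x * haarFn d j m x

/-- `|j| = max(j₁,0) + ⋯ + max(j_d,0)`. -/
def jnorm (d : ℕ) (j : Fin d → ℤ) : ℕ := ∑ i, (j i).toNat

/-- One-dimensional dyadic interval `I_{j,m}`. -/
def dyadicI (j : ℤ) (m : ℕ) : Set ℝ :=
  Set.Ico ((m:ℝ)/2^j.toNat) (((m:ℝ)+1)/2^j.toNat)

/-- `d`-dimensional dyadic box `I_{j,m}`. -/
def dyadicBox (d : ℕ) (j : Fin d → ℤ) (m : Fin d → ℕ) : Set (Fin d → ℝ) :=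
  Set.univ.pi fun i => dyadicI (j i) (m i)

/-- The index set `𝔻_j` as a finset. -/
def Dfin (d : ℕ) (j : Fin d → ℤ) : Finset (Fin d → ℕ) :=
  Fintype.piFinset fun i => Finset.range (2 ^ (j i).toNat)

/-- The index set `𝔻_j` for `j ∈ ℕ₀^d`. -/
def Dfin0 (d : ℕ) (j : Fin d → ℕ) : Finset (Fin d → ℕ) :=
  Fintype.piFinset fun i => Finset.range (2 ^ (j i))

/-- Coordinate of the `k`-th point of a digital sequence over `𝔽₂` with generating
matrix `C` (`0`-based rows and columns). -/
def digitalCoord (C : ℕ → ℕ → ZMod 2) (k : ℕ) : ℝ :=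
  ∑' i : ℕ,
    (((∑ ℓ ∈ Finset.range (k+1), C i ℓ * (if k.testBit ℓ then 1 else 0)).val : ℕ) : ℝ) / 2 ^ (i + 1)

/-- The digital sequence over `𝔽₂` generated by matrices `C 0, …, C (d-1)`. -/
def digitalSeq (d : ℕ) (C : Fin d → ℕ → ℕ → ZMod 2) : ℕ → Fin d → ℝ :=
  fun k j => digitalCoord (C j) k

/-- `C 0, …, C (d-1)` generate an order `α` digital `(t,n,d)`-net over `𝔽₂`,
where the relevant submatrices have `q` rows (`q ≥ αn`) and `n` columns.
Row indices are `0`-based; the `1`-based row value of row `r` is `r+1`. -/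
def IsOrderNet (α n t q d : ℕ) (C : Fin d → ℕ → ℕ → ZMod 2) : Prop :=
  ∀ (ν : Fin d → ℕ) (r : ∀ j : Fin d, Fin (ν j) → ℕ),
    (∀ j, StrictAnti (r j)) →
    (∀ j l, r j l < q) →
    (∑ j, ∑ l ∈ Finset.univ.filter (fun l : Fin (ν j) => (l:ℕ) < α), (r j l + 1)) ≤ α * n - t →
    LinearIndependent (ZMod 2)
      (fun p : Σ j : Fin d, Fin (ν j) => fun col : Fin n => C p.1 (r p.1 p.2) col)

/-- `C 0, …, C (d-1)` generate an order `α` digital `(t,d)`-sequence over `𝔽₂`. -/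
def IsOrderSeq (α t d : ℕ) (C : Fin d → ℕ → ℕ → ZMod 2) : Prop :=
  ∀ n : ℕ, t < α * n → IsOrderNet α n t (α * n) d C

/-- The condition `e_{i,k,ℓ} = 0` for all `k > 2ℓ` (in `1`-based indexing). -/
def Triangular2 (d : ℕ) (E : Fin d → ℕ → ℕ → ZMod 2) : Prop :=
  ∀ i k ℓ, 2 * (ℓ + 1) < k + 1 → E i k ℓ = 0

open scoped Classical in
/-- The quantity `λ(U)⁻¹ ∑_{j ∈ ℕ₀^d} 2^{|j|} ∑_{m : I_{j,m} ⊆ U} ⟨f,h_{j,m}⟩²`. -/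
def bmoSq (d : ℕ) (f : (Fin d → ℝ) → ℝ) (U : Set (Fin d → ℝ)) : ℝ≥0∞ :=
  (volume U)⁻¹ * ∑' j : Fin d → ℕ, ∑ m ∈ Dfin0 d j,
    if dyadicBox d (fun i => (j i : ℤ)) m ⊆ U then
      (2:ℝ≥0∞) ^ (∑ i, j i) * ENNReal.ofReal ((haarCoeff d f (fun i => (j i : ℤ)) m)^2)
    else 0

/-- The BMO (semi-)norm `‖f | bmo^d‖`. -/
def bmoNorm (d : ℕ) (f : (Fin d → ℝ) → ℝ) : ℝ≥0∞ :=
  (⨆ U : {U : Set (Fin d → ℝ) // MeasurableSet U ∧ U ⊆ unitCubeIco d ∧ 0 < volume U},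
    bmoSq d f U.1) ^ (1/2 : ℝ)

/-- The Orlicz norm of `f` on `[0,1)^d` with respect to the Young function `ψ`,
with the convention `inf ∅ = ∞`. -/
def orliczNorm (d : ℕ) (ψ : ℝ → ℝ) (f : (Fin d → ℝ) → ℝ) : ℝ≥0∞ :=
  ⨅ K : {K : ℝ // 0 < K ∧ ∫ x in unitCubeIco d, ψ (|f x| / K) ≤ 1}, ENNReal.ofReal K.1

/-- `ψ` is a Young function which coincides with `exp(x^β) - 1` for all large `x`. -/
def IsYoungExp (β : ℝ) (ψ : ℝ → ℝ) : Prop :=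
  ConvexOn ℝ (Set.Ici 0) ψ ∧ ψ 0 = 0 ∧ (∀ x : ℝ, 0 < x → 0 < ψ x) ∧
    ∃ x₀ : ℝ, ∀ x ≥ x₀, ψ x = Real.exp (x ^ β) - 1

/-- The set of valid Haar indices `j ∈ ℕ_{-1}^d`. -/
def validJ (d : ℕ) : Set (Fin d → ℤ) := {j | ∀ i, -1 ≤ j i}

/-- The `q`-th power of the Haar-characterization of the `S^s_{p,q}B` norm:
`∑_{j ∈ ℕ_{-1}^d} 2^{|j|(s-1/p+1)q} (∑_{m ∈ 𝔻_j} |⟨f,h_{j,m}⟩|^p)^{q/p}`. -/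
def besovSum (d : ℕ) (p q s : ℝ) (f : (Fin d → ℝ) → ℝ) : ℝ≥0∞ :=
  ∑' j : validJ d,
    ENNReal.ofReal ((2:ℝ) ^ ((jnorm d j.1 : ℝ) * (s - 1/p + 1) * q) *
      (∑ m ∈ Dfin d j.1, |haarCoeff d f j.1 m| ^ p) ^ (q / p))

/-- Coordinate of the `k`-th point of a digital net with `q × n` generating matrix `C`. -/
def netCoord (q n : ℕ) (C : ℕ → ℕ → ZMod 2) (k : ℕ) : ℝ :=
  ∑ i ∈ Finset.range q,
    ((∑ ℓ ∈ Finset.range n, C i ℓ * (if k.testBit ℓ then 1 else 0)).val : ℝ) / 2 ^ (i + 1)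

/-- `n_{μ+1}`, with the convention `n_{r+1} = log₂ N` (indices `1`-based, `n` stored `0`-based). -/
def nExt (r : ℕ) (n : Fin r → ℕ) (N : ℕ) (μ : ℕ) : ℝ :=
  if h : μ < r then (n ⟨μ, h⟩ : ℝ) else Real.logb 2 N

/-- `n_μ`, with the convention `n_0 = 0` (indices `1`-based, `n` stored `0`-based). -/
def nPrev (r : ℕ) (n : Fin r → ℕ) (μ : ℕ) : ℝ :=
  if h : 1 ≤ μ ∧ μ ≤ r then (n ⟨μ - 1, by omega⟩ : ℝ) else 0

/-- The dyadic square function `Sf`, valued in `ℝ≥0∞`. -/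
def sqFnE (d : ℕ) (f : (Fin d → ℝ) → ℝ) (x : Fin d → ℝ) : ℝ≥0∞ :=
  (∑' j : validJ d, ∑ m ∈ Dfin d j.1,
    ENNReal.ofReal ((2:ℝ) ^ (2 * jnorm d j.1) * (haarCoeff d f j.1 m)^2 *
      (dyadicBox d j.1 m).indicator (fun _ => (1:ℝ)) x)) ^ (1/2 : ℝ)

/-- `sup_{p > 1} p^{-1/β} ‖f‖_{L_p([0,1]^d)}`. -/
def supLp (d : ℕ) (β : ℝ) (f : (Fin d → ℝ) → ℝ) : ℝ≥0∞ :=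
  ⨆ p : {p : ℝ // 1 < p},
    ENNReal.ofReal ((p:ℝ) ^ (-(1/β))) * eLpNorm f (ENNReal.ofReal (p:ℝ)) (volume.restrict (unitCube d))

/-- `‖f | 𝒟₀^d‖² = ∑_{j ∈ ℕ₀^d} 2^{|j|} ∑_{m ∈ 𝔻_j} ⟨f,h_{j,m}⟩²`. -/
def dNormSq (d : ℕ) (f : (Fin d → ℝ) → ℝ) : ℝ≥0∞ :=
  ∑' j : Fin d → ℕ, ∑ m ∈ Dfin0 d j,
    ENNReal.ofReal ((2:ℝ) ^ (∑ i, j i) * (haarCoeff d f (fun i => (j i : ℤ)) m)^2)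

/-- `‖f | 𝒟₀^d‖`. -/
def dNorm (d : ℕ) (f : (Fin d → ℝ) → ℝ) : ℝ≥0∞ := (dNormSq d f) ^ (1/2 : ℝ)



namespace BmoAux

lemma haar1_eq (j m : ℕ) (x : ℝ) : haar1 (j:ℤ) m x =
    (Set.Ico ((m:ℝ)/2^j) (((m:ℝ)+1/2)/2^j)).indicator (fun _ => (1:ℝ)) x
    - (Set.Ico (((m:ℝ)+1/2)/2^j) (((m:ℝ)+1)/2^j)).indicator (fun _ => (1:ℝ)) x := by
  have h1 : ((j:ℤ) = -1) = False := by
    simp only [eq_iff_iff, iff_false]; omega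
  simp only [haar1, h1, if_false, Int.toNat_natCast, Set.indicator, Set.mem_Ico]
  by_cases ha : (m:ℝ)/2^j ≤ x ∧ x < ((m:ℝ) + 1/2)/2^j
  · have hb : ¬ (((m:ℝ) + 1/2)/2^j ≤ x ∧ x < ((m:ℝ)+1)/2^j) := by
      rintro ⟨h, -⟩; linarith [ha.2]
    rw [if_pos ha, if_pos ha, if_neg hb]; norm_num
  · rw [if_neg ha, if_neg ha]
    split_ifs <;> norm_num

/-- Integral of a continuous function against the one-dimensional Haar function. -/
lemma integral_mul_haar1 (j m : ℕ) (hm : m < 2^j) (f : ℝ → ℝ) (hf : Continuous f) :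
    ∫ x in Set.Icc (0:ℝ) 1, f x * haar1 (j:ℤ) m x =
      (∫ x in ((m:ℝ)/2^j)..(((m:ℝ)+1/2)/2^j), f x)
      - ∫ x in (((m:ℝ)+1/2)/2^j)..(((m:ℝ)+1)/2^j), f x := by
  have hp : (0:ℝ) < 2^j := by positivity
  have hm' : (m:ℝ) + 1 ≤ 2^j := by exact_mod_cast hm
  have hab : (m:ℝ)/2^j ≤ ((m:ℝ)+1/2)/2^j := by gcongr; linarith
  have hbc : ((m:ℝ)+1/2)/2^j ≤ ((m:ℝ)+1)/2^j := by gcongr; norm_num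
  have ha : 0 ≤ (m:ℝ)/2^j := by positivity
  have hc : ((m:ℝ)+1)/2^j ≤ 1 := by rw [div_le_one hp]; exact hm'
  have key : ∀ a b : ℝ, 0 ≤ a → a ≤ b → b ≤ 1 →
      (∫ x in Set.Icc (0:ℝ) 1, (Set.Ico a b).indicator f x) = ∫ x in a..b, f x := by
    intro a b h0 h1 h2
    rw [setIntegral_indicator measurableSet_Ico,
      Set.inter_eq_right.mpr (show Set.Ico a b ⊆ Set.Icc 0 1 from
        fun x hx => ⟨h0.trans hx.1, hx.2.le.trans h2⟩),
      intervalIntegral.integral_of_le h1, integral_Ico_eq_integral_Ioo,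
      integral_Ioc_eq_integral_Ioo]
  have hint : ∀ a b : ℝ, IntegrableOn ((Set.Ico a b).indicator f) (Set.Icc (0:ℝ) 1) := by
    intro a b
    exact (hf.integrableOn_Icc).indicator measurableSet_Ico
  rw [← key _ _ ha hab (hbc.trans hc), ← key _ _ (ha.trans hab) hbc hc,
    ← integral_sub (hint _ _) (hint _ _)]
  congr 1
  ext x
  rw [haar1_eq]
  simp only [Set.indicator]
  split_ifs <;> ring

lemma integral_haar1 (j m : ℕ) (hm : m < 2^j) :
    ∫ x in Set.Icc (0:ℝ) 1, haar1 (j:ℤ) m x = 0 := by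
  have := integral_mul_haar1 j m hm (fun _ => 1) continuous_const
  simp only [one_mul] at this
  rw [this]
  simp only [intervalIntegral.integral_const, smul_eq_mul]
  ring

lemma integral_id_haar1 (j m : ℕ) (hm : m < 2^j) :
    ∫ x in Set.Icc (0:ℝ) 1, x * haar1 (j:ℤ) m x = - (1 / (4 * (2^j)^2)) := by
  rw [integral_mul_haar1 j m hm (fun x => x) continuous_id, integral_id, integral_id]
  have hp : (2:ℝ)^j ≠ 0 := by positivity
  field_simp
  ring

lemma measurable_haar1 (j m : ℕ) : Measurable (haar1 (j:ℤ) m) := by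
  have : haar1 (j:ℤ) m = fun x => (Set.Ico ((m:ℝ)/2^j) (((m:ℝ)+1/2)/2^j)).indicator (fun _ => (1:ℝ)) x
    - (Set.Ico (((m:ℝ)+1/2)/2^j) (((m:ℝ)+1)/2^j)).indicator (fun _ => (1:ℝ)) x := by
    ext x; exact haar1_eq j m x
  rw [this]
  exact (measurable_const.indicator measurableSet_Ico).sub
    (measurable_const.indicator measurableSet_Ico)

lemma abs_haar1_le (j : ℤ) (m : ℕ) (x : ℝ) : |haar1 j m x| ≤ 1 := by
  unfold haar1
  split_ifs <;> norm_num

/-- One-dimensional contribution of a point. -/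
def G (j m : ℕ) (z : ℝ) : ℝ :=
  ∫ x in Set.Icc (0:ℝ) 1, (if z < x then 1 else 0) * haar1 (j:ℤ) m x

lemma G_eq_zero (j m : ℕ) (hm : m < 2^j) (z : ℝ) (hz : z ∉ dyadicI (j:ℤ) m) : G j m z = 0 := by
  simp only [dyadicI, Int.toNat_natCast, Set.mem_Ico, not_and_or, not_le, not_lt] at hz
  have hp : (0:ℝ) < 2^j := by positivity
  have hab : (m:ℝ)/2^j ≤ ((m:ℝ)+1/2)/2^j := by gcongr; linarith
  have hbc : ((m:ℝ)+1/2)/2^j ≤ ((m:ℝ)+1)/2^j := by gcongr; norm_num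
  unfold G
  rcases hz with hz | hz
  · refine Eq.trans ?_ (integral_haar1 j m hm)
    congr 1
    ext x
    by_cases h : z < x
    · simp [h]
    · have : haar1 (j:ℤ) m x = 0 := by
        rw [haar1_eq, Set.indicator_of_notMem, Set.indicator_of_notMem, sub_zero]
        · rintro ⟨h1, h2⟩; linarith
        · rintro ⟨h1, h2⟩; linarith
      simp [this]
  · have : ∀ x : ℝ, (if z < x then (1:ℝ) else 0) * haar1 (j:ℤ) m x = 0 := by
      intro x
      by_cases h : z < x
      · have : haar1 (j:ℤ) m x = 0 := by
          rw [haar1_eq, Set.indicator_of_notMem, Set.indicator_of_notMem, sub_zero]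
          · rintro ⟨h1, h2⟩; linarith
          · rintro ⟨h1, h2⟩; linarith
        simp [this]
      · simp [h]
    simp [this]

lemma restrict_cube (d : ℕ) : (volume : Measure (Fin d → ℝ)).restrict (unitCube d)
    = Measure.pi (fun _ : Fin d => (volume : Measure ℝ).restrict (Set.Icc (0:ℝ) 1)) := by
  unfold unitCube
  rw [volume_pi, Measure.restrict_pi_pi]

lemma integrable_ind (j m : ℕ) (z : ℝ) : Integrable
    (fun x : ℝ => (if z < x then (1:ℝ) else 0) * haar1 (j:ℤ) m x)
    ((volume : Measure ℝ).restrict (Set.Icc (0:ℝ) 1)) := by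
  refine Measure.integrableOn_of_bounded (M := 1) (by simp) ?_ ?_
  · exact ((Measurable.ite measurableSet_Ioi measurable_const measurable_const).mul
      (measurable_haar1 j m)).aestronglyMeasurable
  · refine ae_of_all _ fun x => ?_
    rw [Real.norm_eq_abs, abs_mul]
    have := abs_haar1_le j m x
    split_ifs <;> simp [this]

lemma integrable_idm (j m : ℕ) : Integrable
    (fun x : ℝ => x * haar1 (j:ℤ) m x)
    ((volume : Measure ℝ).restrict (Set.Icc (0:ℝ) 1)) := by
  refine Measure.integrableOn_of_bounded (M := 1) (by simp) ?_ ?_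
  · exact (measurable_id.mul (measurable_haar1 j m)).aestronglyMeasurable
  · refine (ae_restrict_iff' measurableSet_Icc).2 (ae_of_all _ fun x hx => ?_)
    rw [Real.norm_eq_abs, abs_mul]
    have := abs_haar1_le j m x
    have h2 : |x| ≤ 1 := abs_le.2 ⟨by linarith [hx.1], hx.2⟩
    nlinarith [abs_nonneg x, abs_nonneg (haar1 j m x)]

lemma card_eq (d : ℕ) (S : ℕ → Fin d → ℝ) (N : ℕ) (x : Fin d → ℝ) :
    (Nat.card {k : Fin N // ∀ i, S k i < x i} : ℝ) =
      ∑ k ∈ Finset.range N, ∏ i, (if S k i < x i then (1:ℝ) else 0) := by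
  classical
  rw [Nat.card_eq_fintype_card, Fintype.card_subtype, Finset.card_filter, Finset.sum_range]
  push_cast
  refine Finset.sum_congr rfl fun k _ => ?_
  rw [Finset.prod_ite_zero]
  simp

/-- Formula for the (scaled) Haar coefficients of the discrepancy function. -/
lemma coeff_formula (d : ℕ) (S : ℕ → Fin d → ℝ) (N : ℕ) (hN : 0 < N) (j m : Fin d → ℕ)
    (hm : m ∈ Dfin0 d j) :
    (N:ℝ) * haarCoeff d (discSeq d S N) (fun i => (j i : ℤ)) m =
      (∑ k ∈ Finset.range N, ∏ i, G (j i) (m i) (S k i))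
        - N * ∏ i, (- (1 / (4 * ((2:ℝ)^(j i))^2))) := by
  have hN' : (N:ℝ) ≠ 0 := by positivity
  have hm' : ∀ i, m i < 2 ^ j i := by simpa [Dfin0] using hm
  have hpt : ∀ x : Fin d → ℝ, (N:ℝ) * (discSeq d S N x * haarFn d (fun i => (j i : ℤ)) m x) =
      (∑ k ∈ Finset.range N, ∏ i, ((if S k i < x i then (1:ℝ) else 0) * haar1 (j i : ℤ) (m i) (x i)))
       - N * ∏ i, (x i * haar1 (j i : ℤ) (m i) (x i)) := by
    intro x
    simp only [discSeq, haarFn, card_eq, Finset.prod_mul_distrib, ← Finset.sum_mul]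
    field_simp
  unfold haarCoeff
  rw [← integral_const_mul]
  simp only [hpt]
  rw [restrict_cube]
  have i1 : ∀ k, Integrable (fun x : Fin d → ℝ =>
      ∏ i, ((if S k i < x i then (1:ℝ) else 0) * haar1 (j i : ℤ) (m i) (x i)))
      (Measure.pi (fun _ : Fin d => (volume : Measure ℝ).restrict (Set.Icc (0:ℝ) 1))) := fun k =>
    Integrable.fintype_prod (f := fun i (y : ℝ) => (if S k i < y then (1:ℝ) else 0)
      * haar1 (j i : ℤ) (m i) y) (fun i => integrable_ind _ _ _)
  have i2 : Integrable (fun x : Fin d → ℝ => ∏ i, (x i * haar1 (j i : ℤ) (m i) (x i)))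
      (Measure.pi (fun _ : Fin d => (volume : Measure ℝ).restrict (Set.Icc (0:ℝ) 1))) :=
    Integrable.fintype_prod (f := fun i (y : ℝ) => y * haar1 (j i : ℤ) (m i) y)
      (fun i => integrable_idm _ _)
  rw [integral_sub (integrable_finsetSum _ fun k _ => i1 k) (i2.const_mul _),
    integral_finsetSum _ (fun k _ => i1 k), integral_const_mul]
  congr 1
  · refine Finset.sum_congr rfl fun k _ => ?_
    exact integral_fintype_prod_eq_prod (fun i (y : ℝ) => (if S k i < y then (1:ℝ) else 0)
      * haar1 (j i : ℤ) (m i) y)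
  · congr 1
    rw [integral_fintype_prod_eq_prod (fun i (y : ℝ) => y * haar1 (j i : ℤ) (m i) y)]
    exact Finset.prod_congr rfl fun i _ => integral_id_haar1 _ _ (hm' i)

/-- Scaled level energy. -/
def B (d : ℕ) (S : ℕ → Fin d → ℝ) (j : Fin d → ℕ) (N : ℕ) : ℝ :=
  2 ^ (∑ i, j i) * ∑ m ∈ Dfin0 d j,
    ((N:ℝ) * haarCoeff d (discSeq d S N) (fun i => (j i : ℤ)) m) ^ 2

lemma B_nonneg (d : ℕ) (S : ℕ → Fin d → ℝ) (j : Fin d → ℕ) (N : ℕ) : 0 ≤ B d S j N := by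
  unfold B; positivity

lemma card_Dfin0 (d : ℕ) (j : Fin d → ℕ) : (Dfin0 d j).card = 2 ^ (∑ i, j i) := by
  simp [Dfin0, Finset.prod_pow_eq_pow_sum]

lemma prod_sq (d : ℕ) (j : Fin d → ℕ) :
    (∏ i, (- (1 / (4 * ((2:ℝ)^(j i))^2))))^2 = 1 / (16 ^ d * (2 ^ (∑ i, j i))^4) := by
  rw [← Finset.prod_pow]
  have : ∀ i, (- (1 / (4 * ((2:ℝ)^(j i))^2)))^2 = 1 / (16 * ((2:ℝ)^(j i))^4) := by
    intro i; field_simp; norm_num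
  simp only [this]
  rw [Finset.prod_div_distrib, Finset.prod_mul_distrib, Finset.prod_pow,
    Finset.prod_pow_eq_pow_sum]
  simp

lemma B_lower (d : ℕ) (S : ℕ → Fin d → ℝ) (hS : ∀ k, S k ∈ unitCubeIco d) (j : Fin d → ℕ)
    (s : ℕ) (hs : ∑ i, j i = s + 1) (N : ℕ) (hN : 0 < N) :
    1 / 16 ^ (d+1) ≤ B d S j N + B d S j (N + 2 ^ s) := by
  classical
  set p : ℝ := ∏ i, (- (1 / (4 * ((2:ℝ)^(j i))^2))) with hp
  let φ : ℕ → Fin d → ℕ := fun k i => ⌊S k i * 2 ^ (j i)⌋₊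
  set E := Dfin0 d j \ (Finset.Ico N (N + 2^s)).image φ with hE
  have hEcard : (2:ℝ) ^ s ≤ E.card := by
    have h1 : (Dfin0 d j).card - ((Finset.Ico N (N + 2^s)).image φ).card ≤ E.card :=
      Finset.le_card_sdiff _ _
    have h2 : ((Finset.Ico N (N + 2^s)).image φ).card ≤ 2 ^ s :=
      Finset.card_image_le.trans (by simp)
    rw [card_Dfin0, hs, pow_succ] at h1
    have : 2 ^ s ≤ E.card := by omega
    exact_mod_cast this
  have hterm : ∀ m ∈ E, (2^s * p)^2 / 2 ≤
      ((N:ℝ) * haarCoeff d (discSeq d S N) (fun i => (j i : ℤ)) m) ^ 2 +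
      (((N + 2^s : ℕ):ℝ) * haarCoeff d (discSeq d S (N + 2^s)) (fun i => (j i : ℤ)) m) ^ 2 := by
    intro m hmE
    rw [hE, Finset.mem_sdiff] at hmE
    obtain ⟨hm, hnot⟩ := hmE
    have hm' : ∀ i, m i < 2 ^ j i := by simpa [Dfin0] using hm
    rw [coeff_formula d S N hN j m hm, coeff_formula d S (N + 2^s) (Nat.add_pos_left hN _) j m hm, ← hp]
    have hz : ∑ k ∈ Finset.Ico N (N + 2^s), ∏ i, G (j i) (m i) (S k i) = 0 := by
      refine Finset.sum_eq_zero fun k hk => ?_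
      have : ∃ i, S k i ∉ dyadicI (j i : ℤ) (m i) := by
        by_contra! hcon
        apply hnot
        refine Finset.mem_image.2 ⟨k, hk, ?_⟩
        ext i
        have hi := hcon i
        have hpos : (0:ℝ) < 2 ^ (j i) := by positivity
        simp only [dyadicI, Int.toNat_natCast, Set.mem_Ico] at hi
        rw [div_le_iff₀ hpos, lt_div_iff₀ hpos] at hi
        have h0 : 0 ≤ S k i := ((hS k) i (Set.mem_univ i)).1
        exact (Nat.floor_eq_iff (by positivity)).2 hi
      obtain ⟨i, hi⟩ := this
      exact Finset.prod_eq_zero (Finset.mem_univ i) (G_eq_zero _ _ (hm' i) _ hi)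
    have hsum := Finset.sum_range_add_sum_Ico (fun k => ∏ i, G (j i) (m i) (S k i))
      (Nat.le_add_right N (2^s))
    rw [hz, add_zero] at hsum
    rw [← hsum]
    push_cast
    set a := ∑ k ∈ Finset.range N, ∏ i, G (j i) (m i) (S k i)
    nlinarith [sq_nonneg ((a - N * p) + (a - (N + 2^s) * p))]
  have hsumE : (2:ℝ)^s * ((2^s * p)^2 / 2) ≤ ∑ m ∈ Dfin0 d j,
      (((N:ℝ) * haarCoeff d (discSeq d S N) (fun i => (j i : ℤ)) m) ^ 2 +
      (((N + 2^s : ℕ):ℝ) * haarCoeff d (discSeq d S (N + 2^s)) (fun i => (j i : ℤ)) m) ^ 2) := by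
    calc (2:ℝ)^s * ((2^s * p)^2 / 2) ≤ E.card * ((2^s * p)^2 / 2) := by gcongr
      _ = ∑ m ∈ E, (2^s * p)^2 / 2 := by simp
      _ ≤ _ := Finset.sum_le_sum hterm
      _ ≤ _ := Finset.sum_le_sum_of_subset_of_nonneg Finset.sdiff_subset
          (fun _ _ _ => by positivity)
  have hB : B d S j N + B d S j (N + 2 ^ s) = 2 ^ (s+1) * ∑ m ∈ Dfin0 d j,
      (((N:ℝ) * haarCoeff d (discSeq d S N) (fun i => (j i : ℤ)) m) ^ 2 +
      (((N + 2^s : ℕ):ℝ) * haarCoeff d (discSeq d S (N + 2^s)) (fun i => (j i : ℤ)) m) ^ 2) := by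
    unfold B
    rw [hs, Finset.sum_add_distrib, mul_add]
  rw [hB]
  refine le_trans (le_of_eq ?_) (mul_le_mul_of_nonneg_left hsumE (by positivity))
  have hpp : p ^ 2 = 1 / (16 ^ d * (2 ^ (s+1))^4) := by rw [hp, prod_sq, hs]
  rw [mul_pow, hpp, pow_succ (2:ℝ) s, pow_succ (16:ℝ) d]
  field_simp
  norm_num

lemma avg (d : ℕ) (S : ℕ → Fin d → ℝ) (hS : ∀ k, S k ∈ unitCubeIco d) (j : Fin d → ℕ)
    (M s : ℕ) (hs : ∑ i, j i = s + 1) (hM : 2 ^ s ≤ M) :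
    (M:ℝ) * (1 / 16 ^ (d+1)) ≤ 2 * ∑ N ∈ Finset.Ico M (3*M), B d S j N := by
  have hM0 : 0 < M := lt_of_lt_of_le (by positivity) hM
  have h1 : ∑ N ∈ Finset.Ico M (2*M), (1 / 16 ^ (d+1) : ℝ) ≤
      ∑ N ∈ Finset.Ico M (2*M), (B d S j N + B d S j (N + 2 ^ s)) :=
    Finset.sum_le_sum fun N hN => B_lower d S hS j s hs N
      (by have := (Finset.mem_Ico.1 hN).1; omega)
  rw [Finset.sum_add_distrib, Finset.sum_const, Nat.card_Ico, nsmul_eq_mul,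
    Finset.sum_Ico_add' (fun N => B d S j N)] at h1
  have e : 2 * M - M = M := by omega
  rw [e] at h1
  have h2 : ∑ N ∈ Finset.Ico M (2*M), B d S j N ≤ ∑ N ∈ Finset.Ico M (3*M), B d S j N :=
    Finset.sum_le_sum_of_subset_of_nonneg (Finset.Ico_subset_Ico le_rfl (by omega))
      (fun _ _ _ => B_nonneg _ _ _ _)
  have h3 : ∑ N ∈ Finset.Ico (M + 2^s) (2*M + 2^s), B d S j N ≤
      ∑ N ∈ Finset.Ico M (3*M), B d S j N :=
    Finset.sum_le_sum_of_subset_of_nonneg (Finset.Ico_subset_Ico (Nat.le_add_right _ _) (by omega))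
      (fun _ _ _ => B_nonneg _ _ _ _)
  linarith

lemma exists_N (d : ℕ) (hd : 0 < d) (S : ℕ → Fin d → ℝ) (hS : ∀ k, S k ∈ unitCubeIco d)
    (K : ℕ) : ∃ N ∈ Finset.Ico (2^(d*K)) (3 * 2^(d*K)),
      (K:ℝ)^d * (1 / 16 ^ (d+1)) / 4 ≤
        ∑ j ∈ Fintype.piFinset (fun _ : Fin d => Finset.Icc 1 K), B d S j N := by
  set M := 2^(d*K) with hMdef
  have hM0 : 0 < M := by positivity
  set J := Fintype.piFinset (fun _ : Fin d => Finset.Icc 1 K) with hJ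
  have hJc : J.card = K ^ d := by simp [hJ]
  have h1 : ∀ j ∈ J, (M:ℝ) * (1 / 16 ^ (d+1)) / 2 ≤ ∑ N ∈ Finset.Ico M (3*M), B d S j N := by
    intro j hj
    have hj' : ∀ i, 1 ≤ j i ∧ j i ≤ K := by simpa [hJ] using hj
    have hpos : 0 < ∑ i, j i := by
      refine Finset.sum_pos (fun i _ => (hj' i).1) ⟨⟨0, hd⟩, Finset.mem_univ _⟩
    have hle : ∑ i, j i ≤ d * K := by
      calc ∑ i, j i ≤ ∑ _i : Fin d, K := Finset.sum_le_sum fun i _ => (hj' i).2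
        _ = d * K := by simp
    obtain ⟨s, hs⟩ : ∃ s, ∑ i, j i = s + 1 := ⟨_, (Nat.succ_pred_eq_of_pos hpos).symm⟩
    have := avg d S hS j M s hs (Nat.pow_le_pow_right (by norm_num) (by omega))
    linarith
  have h2 := Finset.sum_le_sum h1
  rw [Finset.sum_comm, Finset.sum_const, hJc] at h2
  refine Finset.exists_le_of_sum_le (Finset.nonempty_Ico.2 (by omega)) ?_
  refine le_trans (le_of_eq ?_) h2
  have e : 3 * M - M = 2 * M := by omega
  rw [Finset.sum_const, Nat.card_Ico, e]
  simp only [nsmul_eq_mul]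
  push_cast
  ring

lemma box_subset (d : ℕ) (j m : Fin d → ℕ) (hm : m ∈ Dfin0 d j) :
    dyadicBox d (fun i => (j i : ℤ)) m ⊆ unitCubeIco d := by
  have hm' : ∀ i, m i < 2 ^ j i := by simpa [Dfin0] using hm
  intro x hx i hi
  have := hx i hi
  simp only [dyadicI, Int.toNat_natCast, Set.mem_Ico] at this
  have hpos : (0:ℝ) < 2 ^ (j i) := by positivity
  have h1 : (m i : ℝ) + 1 ≤ 2 ^ j i := by exact_mod_cast hm' i
  refine ⟨le_trans (by positivity) this.1, lt_of_lt_of_le this.2 ?_⟩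
  rw [div_le_one hpos]; exact h1

lemma volume_cube (d : ℕ) : volume (unitCubeIco d) = 1 := by
  unfold unitCubeIco
  rw [volume_pi_pi]; simp

lemma bmoSq_lower (d : ℕ) (S : ℕ → Fin d → ℝ) (N : ℕ) (hN : 0 < N) (J : Finset (Fin d → ℕ)) :
    ENNReal.ofReal ((∑ j ∈ J, B d S j N) / N^2) ≤ bmoSq d (discSeq d S N) (unitCubeIco d) := by
  unfold bmoSq
  rw [volume_cube, inv_one, one_mul]
  refine le_trans (le_of_eq ?_) (ENNReal.sum_le_tsum J)
  rw [Finset.sum_div, ENNReal.ofReal_sum_of_nonneg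
    (fun j _ => div_nonneg (B_nonneg _ _ _ _) (by positivity))]
  refine Finset.sum_congr rfl fun j _ => ?_
  have hN' : (N:ℝ) ≠ 0 := by positivity
  have : B d S j N / N^2 = ∑ m ∈ Dfin0 d j, 2 ^ (∑ i, j i) *
      (haarCoeff d (discSeq d S N) (fun i => (j i : ℤ)) m)^2 := by
    unfold B
    simp only [mul_pow]
    rw [← Finset.mul_sum, ← Finset.mul_sum]
    field_simp
  rw [this, ENNReal.ofReal_sum_of_nonneg (fun _ _ => by positivity)]
  refine Finset.sum_congr rfl fun m hm => ?_
  rw [if_pos (box_subset d j m hm), ENNReal.ofReal_mul (by positivity),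
    ENNReal.ofReal_pow (by norm_num)]
  simp

end BmoAux

/-- For every dimension `d` there is `c_d > 0` such that for every infinite
sequence `S` in `[0,1)^d` one has `‖D_S^N | bmo^d‖ ≥ c_d · N⁻¹ (log N)^{d/2}` for infinitely
many `N`. -/
theorem bmo_discrepancy_lower_bound (d : ℕ) (hd : 0 < d) :
    ∃ c : ℝ, 0 < c ∧ ∀ S : ℕ → Fin d → ℝ, (∀ k, S k ∈ unitCubeIco d) →
      {N : ℕ | ENNReal.ofReal (c * Real.log N ^ ((d:ℝ)/2) / N) ≤
        bmoNorm d (discSeq d S N)}.Infinite := by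
  set c0 : ℝ := 1 / 16 ^ (d+1) / 4 / (3 * d) ^ d with hc0
  have hd' : (1:ℝ) ≤ d := by exact_mod_cast hd
  have hc0pos : 0 < c0 := by positivity
  refine ⟨Real.sqrt c0, Real.sqrt_pos.2 hc0pos, fun S hS => ?_⟩
  refine Set.infinite_of_not_bddAbove ?_
  rintro ⟨R, hR⟩
  obtain ⟨N, hNmem, hNB⟩ := BmoAux.exists_N d hd S hS (R+1)
  rw [Finset.mem_Ico] at hNmem
  have hNR : R < N := by
    have h1 : R + 1 < 2 ^ (R+1) := Nat.lt_two_pow_self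
    have h2 : 2 ^ (R+1) ≤ 2 ^ (d*(R+1)) :=
      Nat.pow_le_pow_right (by norm_num) (Nat.le_mul_of_pos_left _ hd)
    omega
  have hN0 : 0 < N := by omega
  refine absurd (hR ?_) (not_le.2 hNR)
  show ENNReal.ofReal _ ≤ _
  have hNr : (1:ℝ) ≤ N := by exact_mod_cast hN0
  have hlog0 : 0 ≤ Real.log N := Real.log_nonneg hNr
  have hlog : Real.log N ≤ 3 * d * ((R+1 : ℕ):ℝ) := by
    have h1 : (N:ℝ) ≤ 2 ^ (d*(R+1) + 2) := by
      have : N ≤ 2 ^ (d*(R+1) + 2) := by rw [pow_add]; omega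
      exact_mod_cast this
    have h2 := Real.log_le_log (by positivity) h1
    rw [Real.log_pow] at h2
    have h3 : Real.log 2 ≤ 1 := by linarith [Real.log_two_lt_d9]
    have h4 : (((d*(R+1) + 2 : ℕ)):ℝ) * Real.log 2 ≤ ((d*(R+1) + 2 : ℕ):ℝ) :=
      mul_le_of_le_one_right (by positivity) h3
    have h5 : d*(R+1) + 2 ≤ 3 * d * (R+1) := by nlinarith [Nat.mul_le_mul hd (Nat.le_add_left 1 R)]
    have h6 : ((d*(R+1) + 2 : ℕ):ℝ) ≤ ((3 * d * (R+1) : ℕ):ℝ) := by exact_mod_cast h5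
    push_cast at *
    linarith
  have hmain : c0 * Real.log N ^ d ≤
      ∑ j ∈ Fintype.piFinset (fun _ : Fin d => Finset.Icc 1 (R+1)), BmoAux.B d S j N := by
    refine le_trans ?_ hNB
    have h1 : Real.log N ^ d ≤ (3 * d * ((R+1 : ℕ):ℝ)) ^ d := pow_le_pow_left₀ hlog0 hlog d
    refine (mul_le_mul_of_nonneg_left h1 hc0pos.le).trans (le_of_eq ?_)
    rw [hc0, mul_pow (3 * (d:ℝ))]
    have : (3 * (d:ℝ)) ^ d ≠ 0 := by positivity
    field_simp
  have hU : ENNReal.ofReal (c0 * Real.log N ^ d / N^2) ≤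
      ⨆ U : {U : Set (Fin d → ℝ) // MeasurableSet U ∧ U ⊆ unitCubeIco d ∧ 0 < volume U},
        bmoSq d (discSeq d S N) U.1 := by
    refine le_trans ?_ (le_iSup (fun U : {U : Set (Fin d → ℝ) // MeasurableSet U ∧
      U ⊆ unitCubeIco d ∧ 0 < volume U} => bmoSq d (discSeq d S N) U.1)
      ⟨unitCubeIco d, MeasurableSet.univ_pi (fun _ => measurableSet_Ico), subset_rfl,
        by rw [BmoAux.volume_cube]; norm_num⟩)
    refine le_trans ?_ (BmoAux.bmoSq_lower d S N hN0
      (Fintype.piFinset (fun _ : Fin d => Finset.Icc 1 (R+1))))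
    exact ENNReal.ofReal_le_ofReal (div_le_div_of_nonneg_right hmain (by positivity))
  unfold bmoNorm
  refine le_trans (le_of_eq ?_) (ENNReal.rpow_le_rpow hU (by norm_num))
  rw [ENNReal.ofReal_rpow_of_nonneg (by positivity) (by norm_num), ← Real.sqrt_eq_rpow,
    Real.sqrt_div' (c0 * Real.log N ^ d) (by positivity), Real.sqrt_mul hc0pos.le,
    Real.sqrt_sq (by positivity)]
  congr 3
  rw [Real.sqrt_eq_rpow, ← Real.rpow_natCast, ← Real.rpow_mul hlog0]
  congr 1
  ring

end
end

section
/- Let d ∈ ℕ and let S_d be an order 2 digital (t,d)-sequence over 𝔽_2 whose generating matrices E_i = (e_{i,k,ℓ})_{k,ℓ≥1} satisfy e_{i,k,ℓ} = 0 for all k > 2ℓ and all i ∈ {1,…,d}. Then there is a constant C_d > 0 depending only on d such that ‖D_{S_d}^N | bmo^d‖ ≤ C_d · 2^t · N^{−1} (log N)^{d/2} for all integers N ≥ 2. -/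
open MeasureTheory
open scoped ENNReal

noncomputable section

def sg (b : ZMod 2) : ℝ := 1 - 2 * (b.val : ℝ)

lemma zmod2_cases (b : ZMod 2) : b = 0 ∨ b = 1 := by
  revert b; decide

lemma sg_zero : sg 0 = 1 := by simp [sg]

lemma sg_one : sg 1 = -1 := by
  have : (1 : ZMod 2).val = 1 := rfl
  simp [sg, this]; norm_num

lemma sg_add (a b : ZMod 2) : sg (a + b) = sg a * sg b := by
  rcases zmod2_cases a with rfl | rfl <;> rcases zmod2_cases b with rfl | rfl
  · simp [sg_zero]
  · simp [sg_zero]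
  · simp [sg_zero]
  · have : (1 + 1 : ZMod 2) = 0 := rfl
    rw [this, sg_one, sg_zero]; norm_num

lemma abs_sg (a : ZMod 2) : |sg a| = 1 := by
  rcases zmod2_cases a with rfl | rfl <;> simp [sg_zero, sg_one]

def gtent (w : ℝ) : ℝ := max 0 (min w (1 - w))

lemma gtent_nonneg (w : ℝ) : 0 ≤ gtent w := le_max_left _ _

lemma gtent_le (w : ℝ) : gtent w ≤ 1 := by
  unfold gtent
  apply max_le (by norm_num)
  rcases le_total w 1 with h | h
  · exact (min_le_left _ _).trans h
  · exact (min_le_right _ _).trans (by linarith)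

lemma gtent_of_le {w : ℝ} (h : w ≤ 0) : gtent w = 0 := by
  unfold gtent
  exact max_eq_left ((min_le_left _ _).trans h)

lemma gtent_of_ge {w : ℝ} (h : 1 ≤ w) : gtent w = 0 := by
  unfold gtent
  exact max_eq_left ((min_le_right _ _).trans (by linarith))

def cf (R a : ℕ) : ℝ :=
  if a = 0 then 1/4 else if a = R then -(1/2)^(R+1) else -(1/2)^(a+2)

def ch (y : ℕ → ZMod 2) (j a : ℕ) : ℝ := if a = 0 then 1 else sg (y j) * sg (y (j + a))

lemma val_bounds (b : ZMod 2) : 0 ≤ (b.val : ℝ) ∧ (b.val : ℝ) ≤ 1 := by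
  rcases zmod2_cases b with rfl | rfl
  · simp
  · have : (1 : ZMod 2).val = 1 := rfl
    simp [this]

lemma digsum_bounds (y : ℕ → ZMod 2) (R : ℕ) :
    0 ≤ ∑ r ∈ Finset.range R, ((y r).val : ℝ) / 2 ^ (r + 1) ∧
    ∑ r ∈ Finset.range R, ((y r).val : ℝ) / 2 ^ (r + 1) ≤ 1 - (1/2)^R := by
  constructor
  · exact Finset.sum_nonneg fun r _ => div_nonneg (val_bounds _).1 (by positivity)
  · induction R with
    | zero => simp
    | succ R ih =>
      rw [Finset.sum_range_succ]
      have h1 : ((y R).val : ℝ) / 2 ^ (R + 1) ≤ (1/2)^(R+1) := by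
        rw [one_div, inv_pow, div_eq_mul_inv]
        have := (val_bounds (y R)).2
        have h2 : (0:ℝ) < (2 ^ (R+1))⁻¹ := by positivity
        nlinarith
      have h3 : ((1:ℝ)/2)^(R+1) = (1/2)^R / 2 := by rw [pow_succ]; ring
      rw [h3] at h1 ⊢
      linarith

lemma geom_aux (R : ℕ) : ∑ a ∈ Finset.range R, ((1:ℝ)/2)^(a+3) = 1/4 - (1/2)^(R+2) := by
  induction R with
  | zero => norm_num
  | succ R ih => rw [Finset.sum_range_succ, ih]; ring

lemma tent_base (y : ℕ → ZMod 2) (R : ℕ) (hR : 1 ≤ R) (hy : ∀ r, R ≤ r → y r = 0) :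
    gtent (∑ r ∈ Finset.range R, ((y r).val : ℝ) / 2 ^ (r + 1)) =
      ∑ a ∈ Finset.range (R + 1), cf R a * ch y 0 a := by
  obtain ⟨R, rfl⟩ : ∃ R', R = R' + 1 := ⟨R - 1, by omega⟩
  rw [Finset.sum_range_succ', Finset.sum_range_succ', Finset.sum_range_succ]
  set v : ℝ := ∑ r ∈ Finset.range R, ((y (r+1)).val : ℝ) / 2 ^ (r + 1 + 1) with hv
  have hv2 : v = (∑ r ∈ Finset.range R, ((y (r+1)).val : ℝ) / 2 ^ (r + 1)) / 2 := by
    rw [hv, Finset.sum_div]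
    refine Finset.sum_congr rfl fun r _ => ?_
    rw [pow_succ]; field_simp
  have hb := digsum_bounds (fun r => y (r+1)) R
  have hv0 : 0 ≤ v := by rw [hv2]; linarith [hb.1]
  have hv1 : v ≤ 1/2 := by
    have : (0:ℝ) < (1/2)^R := by positivity
    rw [hv2]; linarith [hb.2]
  have hmid : ∑ a ∈ Finset.range R, cf (R+1) (a+1) * ch y 0 (a+1)
      = sg (y 0) * (-(1/4) + (1/2)^(R+2) + v) := by
    have : ∀ a ∈ Finset.range R, cf (R+1) (a+1) * ch y 0 (a+1)
        = sg (y 0) * (-(1/2)^(a+3) + ((y (a+1)).val : ℝ) / 2 ^ (a + 1 + 1)) := by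
      intro a ha
      have ha' : a < R := Finset.mem_range.1 ha
      simp only [cf, ch, Nat.add_eq_zero_iff, one_ne_zero, and_false, if_false, zero_add]
      rw [if_neg (by omega)]
      have : sg (y (a+1)) = 1 - 2 * ((y (a+1)).val : ℝ) := rfl
      rw [this]
      have h2 : ((2:ℝ)^(a+1+1))⁻¹ = (1/2)^(a+2) := by rw [one_div, inv_pow]
      rw [div_eq_mul_inv ((y (a+1)).val : ℝ), h2]
      ring
    rw [Finset.sum_congr rfl this, ← Finset.mul_sum, Finset.sum_add_distrib,
      Finset.sum_neg_distrib, geom_aux]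
    ring
  rw [hmid]
  have h0 : y (R+1) = 0 := hy _ le_rfl
  simp only [cf, ch, Nat.add_eq_zero_iff, one_ne_zero, and_false, if_false, zero_add, if_true,
    h0, sg_zero]
  rcases zmod2_cases (y 0) with h | h
  · rw [h, sg_zero]
    simp only [ZMod.val_zero, Nat.cast_zero, zero_div, add_zero]
    unfold gtent
    rw [min_eq_left (by linarith), max_eq_right hv0]
    ring
  · have h1 : (1 : ZMod 2).val = 1 := rfl
    rw [h, sg_one, h1]
    unfold gtent
    rw [min_eq_right (by norm_num; linarith), max_eq_right (by norm_num; linarith)]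
    norm_num
    ring

lemma tent_digits (j : ℕ) : ∀ m : ℕ, m < 2 ^ j → ∃ β : ℕ → ZMod 2, ∀ (y : ℕ → ZMod 2) (R : ℕ),
    1 ≤ R → (∀ r, j + R ≤ r → y r = 0) →
    gtent (2 ^ j * (∑ r ∈ Finset.range (j + R), ((y r).val : ℝ) / 2 ^ (r + 1)) - m) =
      (if ∀ r, r < j → y r = β r then 1 else 0) * ∑ a ∈ Finset.range (R + 1), cf R a * ch y j a := by
  induction j with
  | zero =>
    intro m hm
    refine ⟨fun _ => 0, fun y R hR hy => ?_⟩
    have : m = 0 := by simpa using hm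
    subst this
    have := tent_base y R hR (by simpa using hy)
    simpa using this
  | succ j ih =>
    intro m hm
    set m' : ℕ := m % 2 ^ j with hm'
    have hm'lt : m' < 2 ^ j := Nat.mod_lt _ (by positivity)
    have hq : m / 2 ^ j < 2 := by
      rw [Nat.div_lt_iff_lt_mul (by positivity)]; rw [pow_succ] at hm; omega
    have hmq : 2 ^ j * (m / 2 ^ j) + m' = m := Nat.div_add_mod m (2^j)
    obtain ⟨β, hβ⟩ := ih m' hm'lt
    refine ⟨fun r => if r = 0 then ((m / 2 ^ j : ℕ) : ZMod 2) else β (r - 1), fun y R hR hy => ?_⟩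
    have key := hβ (fun r => y (r + 1)) R hR (fun r hr => hy _ (by omega))
    have hsum : (∑ r ∈ Finset.range (j + 1 + R), ((y r).val : ℝ) / 2 ^ (r + 1))
        = ((y 0).val : ℝ) / 2 + (∑ r ∈ Finset.range (j + R), ((y (r+1)).val : ℝ) / 2 ^ (r + 1)) / 2 := by
      rw [show j + 1 + R = (j + R) + 1 by ring, Finset.sum_range_succ', Finset.sum_div, add_comm]
      congr 1
      · simp
      · refine Finset.sum_congr rfl fun r _ => ?_
        rw [pow_succ _ (r+1)]; field_simp
    rw [hsum]
    set z := ∑ r ∈ Finset.range (j + R), ((y (r+1)).val : ℝ) / 2 ^ (r + 1) with hz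
    have hb := digsum_bounds (fun r => y (r+1)) (j + R)
    have hz0 : 0 ≤ z := hb.1
    have hz1 : z ≤ 1 := hb.2.trans (by have : (0:ℝ) < (1/2)^(j+R) := by positivity
                                       linarith)
    have hch : ∀ a, ch (fun r => y (r+1)) j a = ch y (j+1) a := by
      intro a; unfold ch; rw [show j + 1 + a = j + a + 1 by ring]
    simp only [hch] at key
    have hp : (0:ℝ) < 2 ^ j := by positivity
    have hm'r : (m' : ℝ) + 1 ≤ 2 ^ j := by exact_mod_cast hm'lt
    have hm'0 : (0:ℝ) ≤ m' := Nat.cast_nonneg _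
    have hmr : (m : ℝ) = 2 ^ j * ((m / 2 ^ j : ℕ) : ℝ) + m' := by exact_mod_cast hmq.symm
    by_cases hcase : y 0 = ((m / 2 ^ j : ℕ) : ZMod 2)
    · have hval : (y 0).val = m / 2 ^ j := by rw [hcase, ZMod.val_natCast_of_lt hq]
      have e1 : (2:ℝ) ^ (j+1) * (((y 0).val : ℝ) / 2 + z / 2) - m = 2 ^ j * z - m' := by
        rw [hval, hmr, pow_succ]; ring
      rw [e1, key]
      congr 1
      have : (∀ r, r < j → y (r+1) = β r) ↔
          (∀ r, r < j + 1 → y r = if r = 0 then ((m / 2 ^ j : ℕ) : ZMod 2) else β (r - 1)) := by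
        constructor
        · intro h r hr
          rcases r with _ | r
          · simpa using hcase
          · simpa using h r (by omega)
        · intro h r hr
          simpa using h (r+1) (by omega)
      simp only [this]
    · rw [if_neg (fun h => hcase (by simpa using h 0 (by omega))), zero_mul]
      rw [hmr, pow_succ]
      have hq' : m / 2 ^ j = 0 ∨ m / 2 ^ j = 1 := by
        clear_value m'
        interval_cases m / 2 ^ j <;> simp
      have h1 : (1 : ZMod 2).val = 1 := rfl
      rcases hq' with h | h <;> rw [h] at hcase ⊢ <;>
        rcases zmod2_cases (y 0) with h' | h' <;> rw [h'] at hcase ⊢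
      · simp at hcase
      · apply gtent_of_ge
        rw [h1]; push_cast
        nlinarith
      · apply gtent_of_le
        simp only [ZMod.val_zero]; push_cast
        nlinarith
      · simp at hcase

lemma haar1_eq (j m : ℕ) (x : ℝ) : haar1 (j:ℤ) m x =
    (Set.Ico ((m:ℝ)/2^j) (((m:ℝ)+1/2)/2^j)).indicator (fun _ => (1:ℝ)) x -
    (Set.Ico (((m:ℝ)+1/2)/2^j) (((m:ℝ)+1)/2^j)).indicator (fun _ => (1:ℝ)) x := by
  unfold haar1
  rw [if_neg (by omega)]
  simp only [Int.toNat_natCast, Set.indicator_apply, Set.mem_Ico]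
  by_cases h1 : (m:ℝ)/2^j ≤ x ∧ x < ((m:ℝ) + 1/2)/2^j
  · rw [if_pos h1, if_pos h1, if_neg (fun h => absurd h.1 (not_le.2 h1.2))]; ring
  · rw [if_neg h1, if_neg h1]
    by_cases h2 : ((m:ℝ) + 1/2)/2^j ≤ x ∧ x < ((m:ℝ)+1)/2^j
    · rw [if_pos h2, if_pos h2]; ring
    · rw [if_neg h2, if_neg h2]; ring

lemma haar1_measurable (j m : ℕ) : Measurable (haar1 (j:ℤ) m) := by
  have : haar1 (j:ℤ) m = fun x => (Set.Ico ((m:ℝ)/2^j) (((m:ℝ)+1/2)/2^j)).indicator (fun _ => (1:ℝ)) x -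
    (Set.Ico (((m:ℝ)+1/2)/2^j) (((m:ℝ)+1)/2^j)).indicator (fun _ => (1:ℝ)) x :=
    funext (haar1_eq j m)
  rw [this]
  exact (measurable_const.indicator measurableSet_Ico).sub (measurable_const.indicator measurableSet_Ico)

lemma int_ico (p q : ℝ) (hp : 0 ≤ p) (hq : q ≤ 1) (φ : ℝ → ℝ) :
    ∫ x in Set.Icc (0:ℝ) 1, φ x * (Set.Ico p q).indicator (fun _ => (1:ℝ)) x
      = ∫ x in Set.Ioc p q, φ x := by
  have : (fun x => φ x * (Set.Ico p q).indicator (fun _ => (1:ℝ)) x) = (Set.Ico p q).indicator φ := by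
    funext x; by_cases h : x ∈ Set.Ico p q <;> simp [h]
  rw [this, setIntegral_indicator measurableSet_Ico, Set.inter_eq_self_of_subset_right,
    integral_Ico_eq_integral_Ioo, integral_Ioc_eq_integral_Ioo]
  intro x hx
  exact ⟨hp.trans hx.1, hx.2.le.trans hq⟩

lemma int_step (p q z : ℝ) :
    ∫ x in Set.Ioc p q, (if z < x then (1:ℝ) else 0) = max (q - max p z) 0 := by
  have : (fun x => if z < x then (1:ℝ) else 0) = (Set.Ioi z).indicator (fun _ => (1:ℝ)) := by
    funext x; simp [Set.indicator_apply]
  rw [this, setIntegral_indicator measurableSet_Ioi]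
  have h2 : Set.Ioc p q ∩ Set.Ioi z = Set.Ioc (max p z) q := by
    ext x; simp only [Set.mem_inter_iff, Set.mem_Ioc, Set.mem_Ioi, max_lt_iff]; tauto
  rw [h2]
  simp [Real.volume_real_Ioc]

lemma step_integrable (s : Set ℝ) (hs : volume s ≠ ⊤) (z : ℝ) :
    IntegrableOn (fun x => if z < x then (1:ℝ) else 0) s := by
  have : Measurable (fun x : ℝ => if z < x then (1:ℝ) else 0) :=
    Measurable.ite measurableSet_Ioi measurable_const measurable_const
  refine Measure.integrableOn_of_bounded (M := 1) hs this.aestronglyMeasurable ?_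
  filter_upwards with x
  split_ifs <;> simp

lemma ind_integrable {φ : ℝ → ℝ} (hφ : IntegrableOn φ (Set.Icc 0 1)) (p q : ℝ) :
    IntegrableOn (fun x => φ x * (Set.Ico p q).indicator (fun _ => (1:ℝ)) x) (Set.Icc 0 1) := by
  have : (fun x => φ x * (Set.Ico p q).indicator (fun _ => (1:ℝ)) x) = (Set.Ico p q).indicator φ := by
    funext x; by_cases h : x ∈ Set.Ico p q <;> simp [h]
  rw [this]
  exact hφ.indicator measurableSet_Ico

lemma haar_integrable {φ : ℝ → ℝ} (hφ : IntegrableOn φ (Set.Icc 0 1)) (j m : ℕ) :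
    IntegrableOn (fun x => φ x * haar1 (j:ℤ) m x) (Set.Icc 0 1) := by
  simp only [haar1_eq, mul_sub]
  exact (ind_integrable hφ _ _).sub (ind_integrable hφ _ _)

lemma haar_int {φ : ℝ → ℝ} (hφ : IntegrableOn φ (Set.Icc 0 1)) (j m : ℕ) (hm : m < 2 ^ j) :
    ∫ x in Set.Icc (0:ℝ) 1, φ x * haar1 (j:ℤ) m x =
      (∫ x in Set.Ioc ((m:ℝ)/2^j) (((m:ℝ)+1/2)/2^j), φ x) -
      ∫ x in Set.Ioc (((m:ℝ)+1/2)/2^j) (((m:ℝ)+1)/2^j), φ x := by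
  simp only [haar1_eq, mul_sub]
  have hp : (0:ℝ) < 2 ^ j := by positivity
  have hm'r : (m : ℝ) + 1 ≤ 2 ^ j := by exact_mod_cast hm
  rw [integral_sub (ind_integrable hφ _ _) (ind_integrable hφ _ _), int_ico, int_ico]
  · positivity
  · rw [div_le_one hp]; linarith
  · positivity
  · rw [div_le_one hp]; linarith

lemma haarA (j m : ℕ) (hm : m < 2 ^ j) (z : ℝ) :
    ∫ x in Set.Icc (0:ℝ) 1, (if z < x then (1:ℝ) else 0) * haar1 (j:ℤ) m x =
      -((1/2)^j * gtent (2^j * z - m)) := by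
  rw [haar_int (step_integrable _ (by simp) z) j m hm, int_step, int_step]
  set h : ℝ := (1/2)^j with hh
  have hpos : 0 < h := by positivity
  have hinv : (2:ℝ)^j * h = 1 := by rw [hh, ← mul_pow]; norm_num
  have e : ∀ a : ℝ, a / 2^j = h * a := by
    intro a; rw [hh, one_div, inv_pow]; field_simp
  set w : ℝ := 2^j * z - m with hw
  have hz : z = h * (w + m) := by rw [hw]; linear_combination (-z) * hinv
  rw [e, e, e]
  have e1 : h * (m + 1/2) = h * m + h/2 := by ring
  have e2 : h * ((m:ℝ) + 1) = h * m + h := by ring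
  have e3 : z = h * m + h * w := by rw [hz]; ring
  rw [e1, e2, e3]
  generalize h * (m:ℝ) = l
  unfold gtent
  rcases le_total w 0 with h0 | h0
  · have : h * w ≤ 0 := mul_nonpos_of_nonneg_of_nonpos hpos.le h0
    rw [max_eq_left (a := l) (by linarith), max_eq_left (a := l + h/2) (by linarith), max_eq_left (by linarith),
      max_eq_left (by linarith), min_eq_left (by linarith), max_eq_left (by linarith)]
    ring
  have hw0 : 0 ≤ h * w := by positivity
  rcases le_total w (1/2) with h1 | h1
  · have : h * w ≤ h * (1/2) := by gcongr
    rw [max_eq_right (a := l) (by linarith), max_eq_left (a := l + h/2) (by linarith), max_eq_left (by linarith),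
      max_eq_left (by linarith), min_eq_left (by linarith), max_eq_right (by linarith)]
    ring
  have hw1 : h * (1/2) ≤ h * w := by gcongr
  rcases le_total w 1 with h2 | h2
  · have : h * w ≤ h * 1 := by gcongr
    rw [max_eq_right (a := l) (by linarith), max_eq_right (by linarith), max_eq_right (a := l + h/2) (by linarith),
      max_eq_left (by linarith), min_eq_right (by linarith), max_eq_right (by linarith)]
    ring
  · have : h * 1 ≤ h * w := by gcongr
    rw [max_eq_right (a := l) (by linarith), max_eq_right (by linarith), max_eq_right (a := l + h/2) (by linarith),
      max_eq_right (by linarith), min_eq_right (by linarith), max_eq_left (by linarith)]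
    ring

lemma haarB (j m : ℕ) (hm : m < 2 ^ j) :
    ∫ x in Set.Icc (0:ℝ) 1, x * haar1 (j:ℤ) m x = -((1/2)^j * ((1/2)^j * (1/4))) := by
  have hp : (0:ℝ) < 2 ^ j := by positivity
  have hid : IntegrableOn (fun x : ℝ => x) (Set.Icc 0 1) :=
    continuous_id.continuousOn.integrableOn_compact isCompact_Icc
  rw [haar_int (φ := fun x => x) hid j m hm, ← intervalIntegral.integral_of_le (by gcongr; linarith),
    ← intervalIntegral.integral_of_le (by gcongr; linarith), integral_id, integral_id]
  rw [one_div_pow]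
  field_simp
  ring

lemma discSeq_eq (d : ℕ) (S : ℕ → Fin d → ℝ) (N : ℕ) (x : Fin d → ℝ) :
    discSeq d S N x = (∑ k ∈ Finset.range N, ∏ i, (if S k i < x i then (1:ℝ) else 0)) / N - ∏ i, x i := by
  classical
  unfold discSeq
  congr 2
  rw [Nat.card_eq_fintype_card, Fintype.card_subtype, ← Finset.sum_boole, ← Fin.sum_univ_eq_sum_range
    (fun k => ∏ i, (if S k i < x i then (1:ℝ) else 0))]
  refine Finset.sum_congr rfl fun k _ => ?_
  rw [Finset.prod_boole]
  simp

lemma cube_measure (d : ℕ) : (volume : Measure (Fin d → ℝ)).restrict (unitCube d) =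
    Measure.pi (fun _ => (volume : Measure ℝ).restrict (Set.Icc 0 1)) := by
  unfold unitCube
  rw [volume_pi, Measure.restrict_pi_pi]

lemma haarCoeff_disc (d : ℕ) (S : ℕ → Fin d → ℝ) (N : ℕ) (hN : 0 < N) (j m : Fin d → ℕ)
    (hm : ∀ i, m i < 2 ^ j i) :
    haarCoeff d (discSeq d S N) (fun i => (j i : ℤ)) m =
      (-1)^d * (1/2)^(∑ i, j i) * (∑ k ∈ Finset.range N,
        ((∏ i, gtent (2 ^ j i * S k i - m i)) - (1/2)^(∑ i, j i) * (1/4)^d)) / N := by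
  unfold haarCoeff haarFn
  have hid : IntegrableOn (fun x : ℝ => x) (Set.Icc 0 1) :=
    continuous_id.continuousOn.integrableOn_compact isCompact_Icc
  have e : ∀ x : Fin d → ℝ, discSeq d S N x * ∏ i, haar1 (j i) (m i) (x i) =
      (∑ k ∈ Finset.range N, ∏ i, ((if S k i < x i then (1:ℝ) else 0) * haar1 (j i) (m i) (x i))) / N
       - ∏ i, (x i * haar1 (j i) (m i) (x i)) := by
    intro x
    rw [discSeq_eq, sub_mul, div_mul_eq_mul_div, Finset.sum_mul]
    simp only [Finset.prod_mul_distrib]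
  simp only [e]
  rw [cube_measure]
  have i1 : ∀ k, Integrable (fun x : Fin d → ℝ => ∏ i, ((if S k i < x i then (1:ℝ) else 0) * haar1 (j i) (m i) (x i)))
      (Measure.pi (fun _ => (volume : Measure ℝ).restrict (Set.Icc 0 1))) := fun k =>
    Integrable.fintype_prod (f := fun i x => (if S k i < x then (1:ℝ) else 0) * haar1 (j i) (m i) x)
      fun i => haar_integrable (step_integrable _ (by simp) (S k i)) (j i) (m i)
  have i2 : Integrable (fun x : Fin d → ℝ => ∏ i, (x i * haar1 (j i) (m i) (x i)))
      (Measure.pi (fun _ => (volume : Measure ℝ).restrict (Set.Icc 0 1))) :=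
    Integrable.fintype_prod (f := fun i x => x * haar1 (j i) (m i) x)
      fun i => haar_integrable hid (j i) (m i)
  rw [integral_sub ((integrable_finsetSum _ fun k _ => i1 k).div_const _) i2, integral_div,
    integral_finsetSum _ (fun k _ => i1 k)]
  have v1 : ∀ k, ∫ x : Fin d → ℝ, ∏ i, ((if S k i < x i then (1:ℝ) else 0) * haar1 (j i) (m i) (x i))
      ∂(Measure.pi (fun _ => (volume : Measure ℝ).restrict (Set.Icc 0 1))) =
      (-1)^d * (1/2)^(∑ i, j i) * ∏ i, gtent (2 ^ j i * S k i - m i) := by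
    intro k
    rw [integral_fintype_prod_eq_prod (f := fun i x => (if S k i < x then (1:ℝ) else 0) * haar1 (j i) (m i) x)]
    simp only [haarA _ _ (hm _)]
    rw [Finset.prod_neg, Finset.prod_mul_distrib, Finset.prod_pow_eq_pow_sum]
    simp; ring
  have v2 : ∫ x : Fin d → ℝ, ∏ i, (x i * haar1 (j i) (m i) (x i))
      ∂(Measure.pi (fun _ => (volume : Measure ℝ).restrict (Set.Icc 0 1))) =
      (-1)^d * (1/2)^(∑ i, j i) * ((1/2)^(∑ i, j i) * (1/4)^d) := by
    rw [integral_fintype_prod_eq_prod (f := fun i x => x * haar1 (j i) (m i) x)]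
    simp only [haarB _ _ (hm _)]
    rw [Finset.prod_neg, Finset.prod_mul_distrib, Finset.prod_mul_distrib, Finset.prod_pow_eq_pow_sum]
    simp; ring
  simp only [v1, v2]
  have hN' : (N:ℝ) ≠ 0 := by positivity
  rw [Finset.sum_sub_distrib, ← Finset.mul_sum]
  simp only [Finset.sum_const, Finset.card_range, nsmul_eq_mul]
  field_simp

def dg (k ℓ : ℕ) : ZMod 2 := if k.testBit ℓ then 1 else 0

def yd (C : ℕ → ℕ → ZMod 2) (k r : ℕ) : ZMod 2 := ∑ ℓ ∈ Finset.range (k+1), C r ℓ * dg k ℓ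

lemma dg_zero_of_lt {k L : ℕ} (h : k < 2 ^ L) (ℓ : ℕ) (hl : L ≤ ℓ) : dg k ℓ = 0 := by
  unfold dg
  rw [Nat.testBit_lt_two_pow (h.trans_le (Nat.pow_le_pow_right (by norm_num) hl))]
  simp

lemma sum_dg_ext (f : ℕ → ZMod 2) (k L M : ℕ) (h : k < 2 ^ L) (hM : L ≤ M) :
    ∑ ℓ ∈ Finset.range M, f ℓ * dg k ℓ = ∑ ℓ ∈ Finset.range L, f ℓ * dg k ℓ := by
  symm
  refine Finset.sum_subset (Finset.range_mono hM) fun ℓ _ hl => ?_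
  rw [dg_zero_of_lt h ℓ (by simpa using hl), mul_zero]

lemma yd_eq (C : ℕ → ℕ → ZMod 2) (k r L : ℕ) (h : k < 2 ^ L) :
    yd C k r = ∑ ℓ ∈ Finset.range L, C r ℓ * dg k ℓ := by
  unfold yd
  have hk : k < 2 ^ (k+1) := (Nat.lt_two_pow_self).trans (Nat.pow_lt_pow_right (by norm_num) (by omega))
  rw [← sum_dg_ext (C r) k (k+1) (max L (k+1)) hk (le_max_right _ _),
    ← sum_dg_ext (C r) k L (max L (k+1)) h (le_max_left _ _)]

lemma yd_zero (C : ℕ → ℕ → ZMod 2) (hC : ∀ k ℓ, 2 * (ℓ + 1) < k + 1 → C k ℓ = 0)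
    (k r L : ℕ) (h : k < 2 ^ L) (hr : 2 * L ≤ r) : yd C k r = 0 := by
  rw [yd_eq C k r L h]
  refine Finset.sum_eq_zero fun ℓ hl => ?_
  have := Finset.mem_range.1 hl
  rw [hC r ℓ (by omega), zero_mul]

lemma coord_eq (C : ℕ → ℕ → ZMod 2) (hC : ∀ k ℓ, 2 * (ℓ + 1) < k + 1 → C k ℓ = 0)
    (k L R : ℕ) (h : k < 2 ^ L) (hR : 2 * L ≤ R) :
    digitalCoord C k = ∑ r ∈ Finset.range R, ((yd C k r).val : ℝ) / 2 ^ (r + 1) := by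
  have : digitalCoord C k = ∑' r : ℕ, ((yd C k r).val : ℝ) / 2 ^ (r + 1) := rfl
  rw [this, tsum_eq_sum]
  intro r hr
  rw [yd_zero C hC k r L h (by simp at hr; omega)]
  simp

def shiftd (C : ℕ → ℕ → ZMod 2) (n a r : ℕ) : ZMod 2 :=
  ∑ ℓ ∈ Finset.range (a+1), C r (n + ℓ) * dg a ℓ

lemma yd_block (C : ℕ → ℕ → ZMod 2) (n a k r : ℕ) (hk : k < 2 ^ n) :
    yd C (2 ^ n * a + k) r = (∑ ℓ : Fin n, C r ℓ * dg k ℓ) + shiftd C n a r := by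
  have h : 2 ^ n * a + k < 2 ^ (n + (a + 1)) := by
    have ha : a < 2 ^ (a+1) := (Nat.lt_two_pow_self).trans (Nat.pow_lt_pow_right (by norm_num) (by omega))
    have : 2 ^ n * (a + 1) ≤ 2 ^ n * 2 ^ (a+1) := Nat.mul_le_mul_left _ ha
    rw [pow_add]
    rw [mul_add] at this
    omega
  rw [yd_eq C _ r _ h, Finset.sum_range_add, Fin.sum_univ_eq_sum_range (fun ℓ => C r ℓ * dg k ℓ)]
  unfold shiftd
  congr 1
  · refine Finset.sum_congr rfl fun ℓ hl => ?_
    have := Finset.mem_range.1 hl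
    unfold dg
    rw [Nat.testBit_two_pow_mul_add _ hk, if_pos this]
  · refine Finset.sum_congr rfl fun ℓ hl => ?_
    unfold dg
    rw [Nat.testBit_two_pow_mul_add _ hk, if_neg (show ¬ (n + ℓ < n) by omega), Nat.add_sub_cancel_left]

lemma sum_bits (n : ℕ) (Φ : (Fin n → ZMod 2) → ℝ) :
    ∑ k ∈ Finset.range (2 ^ n), Φ (fun ℓ => dg k ℓ) = ∑ κ : Fin n → ZMod 2, Φ κ := by
  rw [← Fin.sum_univ_eq_sum_range (fun k => Φ (fun ℓ => dg k ℓ))]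
  refine Fintype.sum_equiv (finFunctionFinEquiv (m := 2) (n := n)).symm _ _ fun k => ?_
  congr 1
  funext ℓ
  unfold dg
  rw [Nat.testBit_eq_decide_div_mod_eq]
  have hv : ((finFunctionFinEquiv (m := 2) (n := n)).symm k ℓ : Fin 2).val = k.val / 2 ^ ℓ.val % 2 := rfl
  have h2 : k.val / 2 ^ ℓ.val % 2 = 0 ∨ k.val / 2 ^ ℓ.val % 2 = 1 := by omega
  apply Fin.ext (n := 2)
  erw [hv]
  rcases h2 with h | h <;> rw [h] <;> rfl

lemma surj_of_li {ι : Type*} [Fintype ι] (n : ℕ) (v : ι → Fin n → ZMod 2)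
    (h : LinearIndependent (ZMod 2) v) (τ : ι → ZMod 2) :
    ∃ κ : Fin n → ZMod 2, ∀ p, ∑ c, v p c * κ c = τ p := by
  have : Fact (Nat.Prime 2) := ⟨Nat.prime_two⟩
  have hr : (Matrix.of v).rank = Fintype.card ι := LinearIndependent.rank_matrix (M := Matrix.of v) h
  have ht : LinearMap.range (Matrix.of v).mulVecLin = ⊤ := by
    apply Submodule.eq_top_of_finrank_eq
    rw [Module.finrank_fintype_fun_eq_card]
    exact hr
  obtain ⟨κ, hκ⟩ := LinearMap.range_eq_top.1 ht τ
  exact ⟨κ, fun p => congrFun hκ p⟩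

def wt (a : ℕ) : ℕ := if a = 0 then 0 else a + 2

def nuRow (j a : ℕ) : ℕ := if a = 0 then j else j + 2

def rowIdx (j a l : ℕ) : ℕ := if a = 0 then j - 1 - l else if l = 0 then j + a else j + 1 - l

lemma rowIdx_anti (j a : ℕ) : StrictAnti (fun l : Fin (nuRow j a) => rowIdx j a l) := by
  intro l l' h
  have h1 := l'.2
  have h2 : (l:ℕ) < l' := h
  unfold nuRow at h1
  simp only [rowIdx]
  split_ifs at * <;> omega

lemma top_two (ν : ℕ) (f : ℕ → ℕ) :
    ∑ l ∈ Finset.univ.filter (fun l : Fin ν => (l:ℕ) < 2), f l ≤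
      (if 0 < ν then f 0 else 0) + (if 1 < ν then f 1 else 0) := by
  rw [Finset.sum_filter]
  rcases ν with _ | _ | ν
  · simp
  · simp
  · rw [Fin.sum_univ_succ, Fin.sum_univ_succ]
    simp

lemma rowIdx_sum (j a : ℕ) :
    ∑ l ∈ Finset.univ.filter (fun l : Fin (nuRow j a) => (l:ℕ) < 2), (rowIdx j a l + 1) ≤
      2 * j + wt a := by
  refine (top_two _ (fun l => rowIdx j a l + 1)).trans ?_
  by_cases ha : a = 0
  · simp only [nuRow, rowIdx, wt, ha, if_true]
    split_ifs <;> omega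
  · simp only [nuRow, rowIdx, wt, ha, if_true, if_false, one_ne_zero]
    split_ifs <;> omega

lemma rowIdx_le (j a l : ℕ) (hl : l < nuRow j a) : rowIdx j a l < 2 * j + wt a := by
  unfold nuRow at hl
  unfold rowIdx wt
  split_ifs at * <;> omega

lemma rows_surj {d t n : ℕ} {E : Fin d → ℕ → ℕ → ZMod 2} (hE : IsOrderSeq 2 t d E)
    (hn : t < 2 * n) (j α : Fin d → ℕ) (hs : ∑ i, (2 * j i + wt (α i)) ≤ 2 * n - t)
    (τ : Fin d → ℕ → ZMod 2) : ∃ δ : Fin n → ZMod 2,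
      (∀ i r, r < j i → ∑ c : Fin n, E i r c * δ c = τ i r) ∧
      (∀ i, α i ≠ 0 → ∑ c : Fin n, E i (j i) c * δ c = τ i (j i) ∧
        ∑ c : Fin n, E i (j i + α i) c * δ c = τ i (j i + α i)) := by
  have hle : ∀ i, 2 * j i + wt (α i) ≤ 2 * n - t := fun i =>
    (Finset.single_le_sum (f := fun i => 2 * j i + wt (α i)) (fun _ _ => Nat.zero_le _)
      (Finset.mem_univ i)).trans hs
  have li := hE n hn (fun i => nuRow (j i) (α i)) (fun i l => rowIdx (j i) (α i) l)
    (fun i => rowIdx_anti _ _)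
    (fun i l => by have := rowIdx_le (j i) (α i) l l.2; have := hle i; omega)
    ((Finset.sum_le_sum fun i _ => rowIdx_sum _ _).trans hs)
  obtain ⟨δ, hδ⟩ := surj_of_li n _ li (fun p => τ p.1 (rowIdx (j p.1) (α p.1) p.2))
  have key : ∀ i l, l < nuRow (j i) (α i) →
      ∑ c : Fin n, E i (rowIdx (j i) (α i) l) c * δ c = τ i (rowIdx (j i) (α i) l) :=
    fun i l hl => hδ ⟨i, ⟨l, hl⟩⟩
  refine ⟨δ, fun i r hr => ?_, fun i hi => ⟨?_, ?_⟩⟩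
  · by_cases ha : α i = 0
    · have := key i (j i - 1 - r) (by unfold nuRow; rw [if_pos ha]; omega)
      have e : rowIdx (j i) (α i) (j i - 1 - r) = r := by unfold rowIdx; rw [if_pos ha]; omega
      rwa [e] at this
    · have := key i (j i + 1 - r) (by unfold nuRow; rw [if_neg ha]; omega)
      have e : rowIdx (j i) (α i) (j i + 1 - r) = r := by
        unfold rowIdx; rw [if_neg ha, if_neg (by omega)]; omega
      rwa [e] at this
  · have := key i 1 (by unfold nuRow; rw [if_neg hi]; omega)
    have e : rowIdx (j i) (α i) 1 = j i := by
      unfold rowIdx; rw [if_neg hi, if_neg (by omega)]; omega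
    rwa [e] at this
  · have := key i 0 (by unfold nuRow; rw [if_neg hi]; omega)
    have e : rowIdx (j i) (α i) 0 = j i + α i := by
      unfold rowIdx; rw [if_neg hi, if_pos rfl]
    rwa [e] at this

def inBox {d n : ℕ} (E : Fin d → ℕ → ℕ → ZMod 2) (σ β : Fin d → ℕ → ZMod 2) (j : Fin d → ℕ)
    (κ : Fin n → ZMod 2) : Prop :=
  ∀ i r, r < j i → (∑ c : Fin n, E i r c * κ c) + σ i r = β i r

open scoped Classical in
lemma box_count {d t n : ℕ} {E : Fin d → ℕ → ℕ → ZMod 2} (hE : IsOrderSeq 2 t d E)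
    (hn : t < 2 * n) (j : Fin d → ℕ) (hs : ∑ i, 2 * j i ≤ 2 * n - t) (σ β : Fin d → ℕ → ZMod 2) :
    ∑ κ : Fin n → ZMod 2, (if inBox E σ β j κ then (1:ℝ) else 0) = 2 ^ n * (1/2) ^ (∑ i, j i) := by
  let φ : (Fin n → ZMod 2) →+ ((Σ i : Fin d, Fin (j i)) → ZMod 2) :=
    { toFun := fun κ p => ∑ c : Fin n, E p.1 p.2 c * κ c
      map_zero' := by funext p; simp
      map_add' := by intro x y; funext p; simp [mul_add, Finset.sum_add_distrib] }
  have hφ : Function.Surjective φ := by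
    intro w
    obtain ⟨δ, hδ, -⟩ := rows_surj hE hn j (fun _ => 0) (by simpa [wt] using hs)
      (fun i r => if h : r < j i then w ⟨i, ⟨r, h⟩⟩ else 0)
    refine ⟨δ, funext fun p => ?_⟩
    have := hδ p.1 p.2 p.2.2
    have h2 : ∑ c : Fin n, E p.1 p.2 c * δ c = w p := by simpa using this
    exact h2
  let fib : ((Σ i : Fin d, Fin (j i)) → ZMod 2) → ℕ := fun w => (Finset.univ.filter fun κ => φ κ = w).card
  have hfib : ∀ w w', fib w = fib w' := by
    intro w w'
    obtain ⟨u, hu⟩ := hφ (w' - w)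
    refine Finset.card_bij (fun κ _ => κ + u) ?_ ?_ ?_
    · intro κ hκ
      simp only [Finset.mem_filter, Finset.mem_univ, true_and] at hκ ⊢
      rw [map_add, hκ, hu]; abel
    · intro a _ b _ h; exact add_right_cancel h
    · intro κ hκ
      simp only [Finset.mem_filter, Finset.mem_univ, true_and] at hκ
      refine ⟨κ - u, ?_, by simp⟩
      simp only [Finset.mem_filter, Finset.mem_univ, true_and]
      rw [map_sub, hκ, hu]; abel
  have htot : ∑ w, fib w = 2 ^ n := by
    have := Finset.card_eq_sum_card_fiberwise (f := φ) (s := Finset.univ) (t := Finset.univ)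
      (fun _ _ => Finset.mem_coe.2 (Finset.mem_univ _))
    rw [← this]
    simp
  let w0 : (Σ i : Fin d, Fin (j i)) → ZMod 2 := fun p => β p.1 p.2 - σ p.1 p.2
  have hw0 : 2 ^ (∑ i, j i) * fib w0 = 2 ^ n := by
    rw [← htot, Finset.sum_congr rfl (fun w _ => hfib w w0)]
    simp
  have hbox : ∀ κ, inBox E σ β j κ ↔ φ κ = w0 := by
    intro κ
    constructor
    · intro h
      funext p
      exact eq_sub_of_add_eq (h p.1 p.2 p.2.2)
    · intro h i r hr
      have := congrFun h ⟨i, ⟨r, hr⟩⟩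
      exact add_eq_of_eq_sub this
  simp only [hbox]
  rw [Finset.sum_boole]
  have : (2:ℝ) ^ (∑ i, j i) * (fib w0 : ℝ) = 2 ^ n := by exact_mod_cast hw0
  rw [← this, mul_right_comm, ← mul_pow]
  norm_num
  rfl

open scoped Classical in
lemma char_sum {d t n : ℕ} {E : Fin d → ℕ → ℕ → ZMod 2} (hE : IsOrderSeq 2 t d E)
    (hn : t < 2 * n) (j α : Fin d → ℕ) (hs : ∑ i, (2 * j i + wt (α i)) ≤ 2 * n - t)
    (hα : ∃ i, α i ≠ 0) (σ β : Fin d → ℕ → ZMod 2) :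
    ∑ κ : Fin n → ZMod 2, (if inBox E σ β j κ then (1:ℝ) else 0) *
      ∏ i, ch (fun r => (∑ c : Fin n, E i r c * κ c) + σ i r) (j i) (α i) = 0 := by
  obtain ⟨i0, hi0⟩ := hα
  obtain ⟨δ, hδ1, hδ2⟩ := rows_surj hE hn j α hs (fun i r => if i = i0 ∧ r = j i then 1 else 0)
  set G : (Fin n → ZMod 2) → ℝ := fun κ => (if inBox E σ β j κ then (1:ℝ) else 0) *
      ∏ i, ch (fun r => (∑ c : Fin n, E i r c * κ c) + σ i r) (j i) (α i) with hG
  have hadd : ∀ κ i r, (∑ c : Fin n, E i r c * (κ + δ) c) =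
      (∑ c : Fin n, E i r c * κ c) + ∑ c : Fin n, E i r c * δ c := by
    intro κ i r
    simp [mul_add, Finset.sum_add_distrib]
  have hflip : ∀ κ, G (κ + δ) = - G κ := by
    intro κ
    simp only [hG]
    have h1 : inBox E σ β j (κ + δ) ↔ inBox E σ β j κ := by
      unfold inBox
      refine forall_congr' fun i => forall_congr' fun r => forall_congr' fun hr => ?_
      rw [hadd, hδ1 i r hr, if_neg (by omega), add_zero]
    have h2 : ∀ i, ch (fun r => (∑ c : Fin n, E i r c * (κ + δ) c) + σ i r) (j i) (α i) =
        (if i = i0 then -1 else 1) * ch (fun r => (∑ c : Fin n, E i r c * κ c) + σ i r) (j i) (α i) := by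
      intro i
      unfold ch
      by_cases ha : α i = 0
      · rw [if_pos ha, if_pos ha, if_neg (by rintro rfl; exact hi0 ha), one_mul]
      · rw [if_neg ha, if_neg ha]
        simp only [hadd]
        rw [(hδ2 i ha).1, (hδ2 i ha).2]
        simp only [and_true]
        rw [if_neg (show ¬ (i = i0 ∧ j i + α i = j i) by omega), add_zero]
        by_cases hi : i = i0
        · rw [if_pos hi, if_pos hi, add_right_comm, sg_add, sg_one]; ring
        · rw [if_neg hi, if_neg hi, add_zero, one_mul]
    simp only [h1, h2]
    rw [Finset.prod_mul_distrib, Finset.prod_ite_eq']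
    simp
  have : ∑ κ, G κ = ∑ κ, G (κ + δ) := (Equiv.sum_comp (Equiv.addRight δ) G).symm
  simp only [hflip, Finset.sum_neg_distrib] at this
  linarith

def fk {d : ℕ} (E : Fin d → ℕ → ℕ → ZMod 2) (j m : Fin d → ℕ) (k : ℕ) : ℝ :=
  ∏ i, gtent (2 ^ j i * digitalSeq d E k i - m i)

lemma fk_nonneg {d : ℕ} (E : Fin d → ℕ → ℕ → ZMod 2) (j m : Fin d → ℕ) (k : ℕ) :
    0 ≤ fk E j m k := Finset.prod_nonneg fun _ _ => gtent_nonneg _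

lemma fk_le_one {d : ℕ} (E : Fin d → ℕ → ℕ → ZMod 2) (j m : Fin d → ℕ) (k : ℕ) :
    fk E j m k ≤ 1 := Finset.prod_le_one (fun _ _ => gtent_nonneg _) fun _ _ => gtent_le _

open scoped Classical in
lemma fk_formula {d : ℕ} (E : Fin d → ℕ → ℕ → ZMod 2) (hT : Triangular2 d E) (j m : Fin d → ℕ)
    (hm : ∀ i, m i < 2 ^ j i) : ∃ β : Fin d → ℕ → ZMod 2, ∀ k L : ℕ, k < 2 ^ L →
      fk E j m k = (if ∀ i r, r < j i → yd (E i) k r = β i r then 1 else 0) *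
        ∏ i, ∑ a ∈ Finset.range (2 * L + 1 + 1), cf (2 * L + 1) a * ch (yd (E i) k) (j i) a := by
  choose β hβ using fun i => tent_digits (j i) (m i) (hm i)
  refine ⟨β, fun k L hk => ?_⟩
  unfold fk
  have h : ∀ i, gtent (2 ^ j i * digitalSeq d E k i - m i) =
      (if ∀ r, r < j i → yd (E i) k r = β i r then 1 else 0) *
        ∑ a ∈ Finset.range (2 * L + 1 + 1), cf (2 * L + 1) a * ch (yd (E i) k) (j i) a := by
    intro i
    rw [← hβ i (yd (E i) k) (2 * L + 1) (by omega)
      (fun r hr => yd_zero (E i) (hT i) k r L hk (by omega))]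
    rw [← coord_eq (E i) (hT i) k L _ hk (by omega)]
    rfl
  simp only [h]
  rw [Finset.prod_mul_distrib, Finset.prod_boole]
  simp

lemma block_lt (n a k : ℕ) (hk : k < 2 ^ n) : 2 ^ n * a + k < 2 ^ (n + (a + 1)) := by
  have ha : a < 2 ^ (a+1) := (Nat.lt_two_pow_self).trans (Nat.pow_lt_pow_right (by norm_num) (by omega))
  have : 2 ^ n * (a + 1) ≤ 2 ^ n * 2 ^ (a+1) := Nat.mul_le_mul_left _ ha
  rw [pow_add]
  rw [mul_add] at this
  omega

open scoped Classical in
lemma fk_block {d : ℕ} (E : Fin d → ℕ → ℕ → ZMod 2) (hT : Triangular2 d E) (j m : Fin d → ℕ)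
    (hm : ∀ i, m i < 2 ^ j i) (n a : ℕ) : ∃ (β σ : Fin d → ℕ → ZMod 2) (R : ℕ), 
      ∀ k, k < 2 ^ n →
      fk E j m (2 ^ n * a + k) =
        (if inBox E σ β j (fun ℓ : Fin n => dg k ℓ) then 1 else 0) *
        ∑ α ∈ Fintype.piFinset (fun _ : Fin d => Finset.range (R + 1)), ((∏ i, cf R (α i)) *
          ∏ i, ch (fun r => (∑ c : Fin n, E i r c * dg k c) + σ i r) (j i) (α i)) := by
  obtain ⟨β, hβ⟩ := fk_formula E hT j m hm
  refine ⟨β, fun i r => shiftd (E i) n a r, 2 * (n + (a+1)) + 1, fun k hk => ?_⟩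
  rw [hβ _ _ (block_lt n a k hk)]
  have hy : ∀ i, yd (E i) (2 ^ n * a + k) =
      fun r => (∑ c : Fin n, E i r c * dg k c) + shiftd (E i) n a r := fun i =>
    funext fun r => yd_block (E i) n a k r hk
  rw [Finset.prod_univ_sum]
  simp only [hy, Finset.prod_mul_distrib]
  congr 1
  exact if_congr Iff.rfl rfl rfl

lemma geom34 (R : ℕ) : ∑ a ∈ Finset.range R, (2:ℝ) * (3/4)^(a+3) ≤ 27/8 := by
  have : ∑ a ∈ Finset.range R, (2:ℝ) * (3/4)^(a+3) = 27/8 * (1 - (3/4)^R) := by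
    induction R with
    | zero => simp
    | succ R ih => rw [Finset.sum_range_succ, ih]; ring
  rw [this]
  have : (0:ℝ) < (3/4)^R := by positivity
  linarith

lemma cf_sum (R : ℕ) : ∑ a ∈ Finset.range (R + 1), |cf R a| * (3/2)^(wt a) ≤ 4 := by
  rw [Finset.sum_range_succ']
  have h0 : |cf R 0| * (3/2)^(wt 0) = 1/4 := by simp [cf, wt]
  have h1 : ∀ a ∈ Finset.range R, |cf R (a+1)| * (3/2)^(wt (a+1)) ≤ 2 * (3/4)^(a+3) := by
    intro a _
    have hw : wt (a+1) = a + 3 := by simp [wt]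
    have hc : |cf R (a+1)| ≤ 2 * (1/2)^(a+3) := by
      unfold cf
      rw [if_neg (by omega)]
      split_ifs with h
      · rw [← h, abs_neg, abs_of_nonneg (by positivity)]
        apply le_of_eq; ring
      · rw [abs_neg, abs_of_nonneg (by positivity)]
        have : (0:ℝ) < (1/2)^(a+3) := by positivity
        rw [show a + 1 + 2 = a + 3 by ring]; linarith
    rw [hw]
    calc |cf R (a+1)| * (3/2)^(a+3) ≤ (2 * (1/2)^(a+3)) * (3/2)^(a+3) := by gcongr
      _ = 2 * (3/4)^(a+3) := by rw [mul_assoc, ← mul_pow]; norm_num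
  have := (Finset.sum_le_sum h1).trans (geom34 R)
  rw [h0]
  linarith

lemma abs_ch_le (y : ℕ → ZMod 2) (j a : ℕ) : |ch y j a| ≤ 1 := by
  unfold ch
  split_ifs
  · simp
  · rw [abs_mul, abs_sg, abs_sg]; simp

open scoped Classical in
lemma block_est {d t n : ℕ} {E : Fin d → ℕ → ℕ → ZMod 2} (hE : IsOrderSeq 2 t d E)
    (hT : Triangular2 d E) (j m : Fin d → ℕ) (hm : ∀ i, m i < 2 ^ j i)
    (hn : t + 2 * ∑ i, j i < 2 * n) (a : ℕ) :
    |∑ k ∈ Finset.range (2 ^ n), (fk E j m (2 ^ n * a + k) - (1/2)^(∑ i, j i) * (1/4)^d)| ≤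
      4 ^ d * (2 ^ n * (1/2)^(∑ i, j i) * (2/3) ^ (2 * n - t - 2 * ∑ i, j i)) := by
  obtain ⟨β, σ, R, hf⟩ := fk_block E hT j m hm n a
  set J := ∑ i, j i with hJ
  have hJ2 : ∑ i, 2 * j i = 2 * J := by rw [hJ, Finset.mul_sum]
  set P : ℝ := 2 ^ n * (1/2)^J with hP
  have hP0 : 0 < P := by positivity
  set M := 2 * n - t - 2 * J with hM
  set A := Fintype.piFinset (fun _ : Fin d => Finset.range (R + 1)) with hA
  have hcount := box_count hE (by omega) j (by omega : ∑ i, 2 * j i ≤ 2 * n - t) σ β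
  rw [← hJ, ← hP] at hcount
  set S : (Fin d → ℕ) → ℝ := fun α => ∑ κ : Fin n → ZMod 2, (if inBox E σ β j κ then (1:ℝ) else 0) *
      ∏ i, ch (fun r => (∑ c : Fin n, E i r c * κ c) + σ i r) (j i) (α i) with hS
  have hsum : ∑ k ∈ Finset.range (2 ^ n), fk E j m (2 ^ n * a + k) = ∑ α ∈ A, (∏ i, cf R (α i)) * S α := by
    rw [Finset.sum_congr rfl fun k hk => hf k (Finset.mem_range.1 hk)]
    have := sum_bits n (fun κ => (if inBox E σ β j κ then (1:ℝ) else 0) *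
        ∑ α ∈ A, ((∏ i, cf R (α i)) *
          ∏ i, ch (fun r => (∑ c : Fin n, E i r c * κ c) + σ i r) (j i) (α i)))
    rw [this]
    simp only [Finset.mul_sum, hS]
    rw [Finset.sum_comm]
    refine Finset.sum_congr rfl fun α _ => Finset.sum_congr rfl fun κ _ => ?_
    ring
  have hS0 : S 0 = P := by
    rw [← hcount]
    simp only [hS]
    refine Finset.sum_congr rfl fun κ _ => ?_
    simp [ch]
  have hSle : ∀ α, |S α| ≤ P := by
    intro α
    rw [← hcount]
    refine (Finset.abs_sum_le_sum_abs _ _).trans (Finset.sum_le_sum fun κ _ => ?_)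
    rw [abs_mul, Finset.abs_prod]
    have h1 : ∏ i, |ch (fun r => (∑ c : Fin n, E i r c * κ c) + σ i r) (j i) (α i)| ≤ 1 :=
      Finset.prod_le_one (fun _ _ => abs_nonneg _) fun _ _ => abs_ch_le _ _ _
    split_ifs
    · simpa using h1
    · simp
  have hconst : ∑ k ∈ Finset.range (2 ^ n), ((1/2:ℝ)^J * (1/4)^d) =
      ∑ α ∈ A, if α = 0 then (∏ i, cf R (α i)) * S α else 0 := by
    rw [Finset.sum_ite_eq']
    have : (0 : Fin d → ℕ) ∈ A := by simp [hA]
    rw [if_pos this, hS0]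
    simp [cf, hP]
    ring
  rw [Finset.sum_sub_distrib, hsum, hconst, ← Finset.sum_sub_distrib]
  refine (Finset.abs_sum_le_sum_abs _ _).trans ?_
  have hterm : ∀ α ∈ A, |(∏ i, cf R (α i)) * S α - (if α = 0 then (∏ i, cf R (α i)) * S α else 0)| ≤
      (P * (2/3)^M) * ∏ i, (|cf R (α i)| * (3/2)^(wt (α i))) := by
    intro α _
    have hrhs : 0 ≤ (P * (2/3)^M) * ∏ i, (|cf R (α i)| * (3/2)^(wt (α i))) := by
      refine mul_nonneg (by positivity) (Finset.prod_nonneg fun i _ => by positivity)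
    by_cases h0 : α = 0
    · rw [if_pos h0, sub_self, abs_zero]; exact hrhs
    rw [if_neg h0, sub_zero]
    by_cases hg : ∑ i, (2 * j i + wt (α i)) ≤ 2 * n - t
    · have : S α = 0 := char_sum hE (by omega) j α hg (by
        by_contra hcon
        push Not at hcon
        exact h0 (funext hcon)) σ β
      rw [this, mul_zero, abs_zero]; exact hrhs
    · have hw : M ≤ ∑ i, wt (α i) := by
        rw [Finset.sum_add_distrib, hJ2] at hg
        omega
      rw [abs_mul, Finset.abs_prod, Finset.prod_mul_distrib, Finset.prod_pow_eq_pow_sum]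
      have h1 : (1:ℝ) ≤ (2/3)^M * (3/2)^(∑ i, wt (α i)) := by
        calc (1:ℝ) = (2/3)^M * (3/2)^M := by rw [← mul_pow]; norm_num
          _ ≤ _ := by gcongr; norm_num
      have h2 : 0 ≤ ∏ i, |cf R (α i)| := Finset.prod_nonneg fun i _ => abs_nonneg _
      calc (∏ i, |cf R (α i)|) * |S α| ≤ (∏ i, |cf R (α i)|) * P := by gcongr; exact hSle α
        _ ≤ (∏ i, |cf R (α i)|) * P * ((2/3)^M * (3/2)^(∑ i, wt (α i))) :=
            le_mul_of_one_le_right (by positivity) h1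
        _ = _ := by ring
  refine (Finset.sum_le_sum hterm).trans ?_
  rw [← Finset.mul_sum, hA, ← Finset.prod_univ_sum (fun _ : Fin d => Finset.range (R+1))
    (fun _ a => |cf R a| * (3/2)^(wt a)), mul_comm]
  have : ∏ _i : Fin d, ∑ a ∈ Finset.range (R + 1), |cf R a| * (3/2)^(wt a) ≤ ∏ _i : Fin d, (4:ℝ) :=
    Finset.prod_le_prod (fun _ _ => Finset.sum_nonneg fun _ _ => by positivity) fun _ _ => cf_sum R
  simp only [Finset.prod_const, Finset.card_univ, Fintype.card_fin] at this ⊢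
  gcongr

open scoped Classical in
lemma part_est {d t n : ℕ} {E : Fin d → ℕ → ℕ → ZMod 2} (hE : IsOrderSeq 2 t d E)
    (hT : Triangular2 d E) (j m : Fin d → ℕ) (hm : ∀ i, m i < 2 ^ j i)
    (hn : t + 2 * ∑ i, j i < 2 * n) (a r : ℕ) (hr : r ≤ 2 ^ n) :
    |∑ k ∈ Finset.range r, (fk E j m (2 ^ n * a + k) - (1/2)^(∑ i, j i) * (1/4)^d)| ≤
      2 ^ n * (1/2)^(∑ i, j i) := by
  obtain ⟨β, σ, R, hf⟩ := fk_block E hT j m hm n a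
  have hcount := box_count (n := n) hE (by omega) j (by rw [← Finset.mul_sum]; omega) σ β
  rw [← hcount]
  have hle : ∀ k ∈ Finset.range (2 ^ n), fk E j m (2 ^ n * a + k) ≤
      (if inBox E σ β j (fun ℓ : Fin n => dg k ℓ) then 1 else 0) := by
    intro k hk
    have := hf k (Finset.mem_range.1 hk)
    split_ifs at this ⊢
    · exact fk_le_one _ _ _ _
    · rw [this, zero_mul]
  have h1 : ∑ k ∈ Finset.range r, fk E j m (2 ^ n * a + k) ≤
      ∑ κ : Fin n → ZMod 2, (if inBox E σ β j κ then (1:ℝ) else 0) := by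
    rw [← sum_bits n (fun κ => if inBox E σ β j κ then (1:ℝ) else 0)]
    refine le_trans (Finset.sum_le_sum_of_subset_of_nonneg (Finset.range_mono hr)
      fun _ _ _ => fk_nonneg _ _ _ _) (Finset.sum_le_sum hle)
  have h2 : ∑ k ∈ Finset.range r, ((1/2:ℝ)^(∑ i, j i) * (1/4)^d) ≤
      ∑ κ : Fin n → ZMod 2, (if inBox E σ β j κ then (1:ℝ) else 0) := by
    rw [hcount]
    simp only [Finset.sum_const, Finset.card_range, nsmul_eq_mul]
    have h3 : (r:ℝ) ≤ 2 ^ n := by exact_mod_cast hr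
    have h4 : ((1:ℝ)/4)^d ≤ 1 := pow_le_one₀ (by norm_num) (by norm_num)
    calc (r:ℝ) * ((1/2:ℝ)^(∑ i, j i) * (1/4)^d) ≤ 2 ^ n * ((1/2:ℝ)^(∑ i, j i) * 1) := by gcongr
      _ = _ := by ring
  have h3 : 0 ≤ ∑ k ∈ Finset.range r, fk E j m (2 ^ n * a + k) :=
    Finset.sum_nonneg fun _ _ => fk_nonneg _ _ _ _
  have h4 : 0 ≤ ∑ k ∈ Finset.range r, ((1/2:ℝ)^(∑ i, j i) * (1/4)^d) :=
    Finset.sum_nonneg fun _ _ => by positivity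
  rw [Finset.sum_sub_distrib, abs_le]
  constructor <;> linarith

/-- Aligned initial segments. -/
lemma aligned_est {d t : ℕ} {E : Fin d → ℕ → ℕ → ZMod 2} (hE : IsOrderSeq 2 t d E)
    (hT : Triangular2 d E) (j m : Fin d → ℕ) (hm : ∀ i, m i < 2 ^ j i) (a : ℕ) : ∀ p : ℕ,
    t < 2 * p →
    |∑ k ∈ Finset.range (2 ^ (∑ i, j i + p) * a), (fk E j m k - (1/2)^(∑ i, j i) * (1/4)^d)| ≤
      4 ^ d * (3/2)^t * 9 * (8/9) ^ p := by
  induction a using Nat.strong_induction_on with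
  | _ a ih =>
    intro p hp
    rcases Nat.eq_zero_or_pos a with rfl | ha
    · simp; positivity
    set J := ∑ i, j i with hJ
    have hih := ih (a / 2) (by omega) (p + 1) (by omega)
    have hblock : ∀ b, |∑ k ∈ Finset.range (2 ^ (J + p)), (fk E j m (2 ^ (J+p) * b + k) - (1/2)^J * (1/4)^d)|
        ≤ 4 ^ d * (3/2)^t * (8/9)^p := by
      intro b
      refine (block_est hE hT j m hm (n := J + p) (by omega) b).trans (le_of_eq ?_)
      rw [← hJ, show 2 * (J + p) - t - 2 * J = 2 * p - t by omega]
      have e1 : ((2:ℝ)/3)^(2 * p - t) = (2/3)^(2*p) * (3/2)^t := by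
        have : 2 * p = (2 * p - t) + t := by omega
        conv_rhs => rw [this, pow_add, mul_assoc, ← mul_pow]
        norm_num
      have e2 : (2:ℝ)^(J+p) * (1/2)^J = 2^p := by
        rw [pow_add, mul_right_comm, ← mul_pow]; norm_num
      rw [e1, e2, pow_mul]
      have e3 : (2:ℝ)^p * ((2/3)^2)^p = (8/9)^p := by rw [← mul_pow]; norm_num
      rw [← e3]; ring
    have hpos : (0:ℝ) ≤ 4 ^ d * (3/2)^t * (8/9)^p := by positivity
    have e8 : (8/9:ℝ)^(p+1) = 8/9 * (8/9)^p := by ring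
    rw [e8] at hih
    have hsplit : 2 ^ (J + (p+1)) * (a / 2) = 2 ^ (J + p) * (2 * (a / 2)) := by ring
    rw [hsplit] at hih
    rcases Nat.even_or_odd a with he | ho
    · have h2 : 2 * (a / 2) = a := Nat.two_mul_div_two_of_even he
      rw [h2] at hih
      linarith
    · have h2 : 2 * (a / 2) + 1 = a := Nat.two_mul_div_two_add_one_of_odd ho
      have h3 : 2 ^ (J+p) * a = 2 ^ (J + p) * (2 * (a / 2)) + 2 ^ (J + p) := by
        conv_lhs => rw [← h2]
        ring
      rw [h3, Finset.sum_range_add]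
      refine (abs_add_le _ _).trans ?_
      have := hblock (2 * (a/2))
      linarith

lemma full_est {d t : ℕ} {E : Fin d → ℕ → ℕ → ZMod 2} (hE : IsOrderSeq 2 t d E)
    (hT : Triangular2 d E) (j m : Fin d → ℕ) (hm : ∀ i, m i < 2 ^ j i) (N : ℕ) :
    |∑ k ∈ Finset.range N, (fk E j m k - (1/2)^(∑ i, j i) * (1/4)^d)| ≤
      (9 * 4 ^ d + 2) * 2 ^ t := by
  set J := ∑ i, j i with hJ
  set p := t / 2 + 1 with hp
  have hN : N = 2 ^ (J + p) * (N / 2 ^ (J + p)) + N % 2 ^ (J + p) := (Nat.div_add_mod _ _).symm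
  rw [hN, Finset.sum_range_add]
  refine (abs_add_le _ _).trans ?_
  have h1 := aligned_est hE hT j m hm (N / 2 ^ (J + p)) p (by omega)
  have h2 := part_est hE hT j m hm (n := J + p) (by omega) (N / 2 ^ (J + p)) (N % 2 ^ (J + p))
    (Nat.mod_lt _ (by positivity)).le
  rw [← hJ] at h1 h2
  have e2 : (2:ℝ)^(J+p) * (1/2)^J = 2^p := by
    rw [pow_add, mul_right_comm, ← mul_pow]; norm_num
  rw [e2] at h2
  have h3 : (2:ℝ)^p ≤ 2 * 2^t := by
    rw [hp, pow_succ, mul_comm]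
    gcongr
    · norm_num
    · omega
  have h4 : (4:ℝ) ^ d * (3/2)^t * 9 * (8/9) ^ p ≤ 4^d * 2^t * 9 * 1 := by
    gcongr
    · norm_num
    · exact pow_le_one₀ (by norm_num) (by norm_num)
  linarith

lemma gtent_int (z : ℤ) : gtent (z : ℝ) = 0 := by
  rcases le_or_gt z 0 with h | h
  · exact gtent_of_le (by exact_mod_cast h)
  · exact gtent_of_ge (by exact_mod_cast h)

lemma fk_zero {d : ℕ} (E : Fin d → ℕ → ℕ → ZMod 2) (hT : Triangular2 d E) (j m : Fin d → ℕ)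
    (k L : ℕ) (hk : k < 2 ^ L) (i : Fin d) (hi : 2 * L ≤ j i) : fk E j m k = 0 := by
  unfold fk
  refine Finset.prod_eq_zero (Finset.mem_univ i) ?_
  have : digitalSeq d E k i = digitalCoord (E i) k := rfl
  rw [this, coord_eq (E i) (hT i) k L (2 * L) hk le_rfl]
  have e : (2:ℝ) ^ j i * (∑ r ∈ Finset.range (2 * L), ((yd (E i) k r).val : ℝ) / 2 ^ (r + 1)) - m i =
      (((∑ r ∈ Finset.range (2 * L), (yd (E i) k r).val * 2 ^ (j i - (r + 1)) : ℕ) : ℤ) - (m i : ℤ) : ℤ) := by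
    push_cast
    rw [Finset.mul_sum]
    congr 1
    refine Finset.sum_congr rfl fun r hr => ?_
    have hr' := Finset.mem_range.1 hr
    have : (2:ℝ) ^ j i = 2 ^ (j i - (r + 1)) * 2 ^ (r + 1) := by
      rw [← pow_add]; congr 1; omega
    rw [this]
    field_simp
  rw [e, gtent_int]

lemma dyadicI_vol (j m : ℕ) : volume (dyadicI (j:ℤ) m) = ((2:ℝ≥0∞) ^ j)⁻¹ := by
  unfold dyadicI
  rw [Real.volume_Ico, Int.toNat_natCast, ← sub_div, add_sub_cancel_left, one_div,
    ENNReal.ofReal_inv_of_pos (by positivity), ENNReal.ofReal_pow (by norm_num)]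
  simp

lemma dyadicBox_vol (d : ℕ) (j m : Fin d → ℕ) :
    volume (dyadicBox d (fun i => (j i : ℤ)) m) = ((2:ℝ≥0∞) ^ (∑ i, j i))⁻¹ := by
  unfold dyadicBox
  rw [volume_pi_pi]
  simp only [dyadicI_vol]
  rw [← Finset.prod_pow_eq_pow_sum]
  exact (ENNReal.prod_inv_distrib (fun a _ b _ _ => Or.inr (by simp))).symm

lemma dyadicI_disj (j m m' : ℕ) (x : ℝ) (h : x ∈ dyadicI (j:ℤ) m) (h' : x ∈ dyadicI (j:ℤ) m') :
    m = m' := by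
  unfold dyadicI at h h'
  rw [Int.toNat_natCast, Set.mem_Ico] at h h'
  have hp : (0:ℝ) < 2 ^ j := by positivity
  rw [div_le_iff₀ hp, lt_div_iff₀ hp] at h h'
  have h1 : (m:ℝ) < m' + 1 := by linarith
  have h2 : (m':ℝ) < m + 1 := by linarith
  have h1' : m < m' + 1 := by exact_mod_cast h1
  have h2' : m' < m + 1 := by exact_mod_cast h2
  omega

lemma dyadicBox_meas (d : ℕ) (j m : Fin d → ℕ) : MeasurableSet (dyadicBox d (fun i => (j i : ℤ)) m) :=
  MeasurableSet.univ_pi fun _ => measurableSet_Ico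

open scoped Classical in
lemma box_card (d : ℕ) (j : Fin d → ℕ) (U : Set (Fin d → ℝ)) (s : Finset (Fin d → ℕ)) :
    (((s.filter fun m => dyadicBox d (fun i => (j i : ℤ)) m ⊆ U).card : ℕ) : ℝ≥0∞) ≤
      2 ^ (∑ i, j i) * volume U := by
  set T := s.filter fun m => dyadicBox d (fun i => (j i : ℤ)) m ⊆ U with hT
  have hdis : (T : Set (Fin d → ℕ)).PairwiseDisjoint (fun m => dyadicBox d (fun i => (j i : ℤ)) m) := by
    intro m _ m' _ hne
    rw [Function.onFun, Set.disjoint_left]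
    intro x hx hx'
    exact hne (funext fun i => dyadicI_disj (j i) (m i) (m' i) (x i) (hx i trivial) (hx' i trivial))
  have h1 := measure_biUnion_finset (μ := volume) hdis (fun m _ => dyadicBox_meas d j m)
  have h2 : volume (⋃ m ∈ T, dyadicBox d (fun i => (j i : ℤ)) m) ≤ volume U := by
    apply measure_mono
    refine Set.iUnion₂_subset fun m hm => ?_
    exact (Finset.mem_filter.1 hm).2
  rw [h1] at h2
  simp only [dyadicBox_vol, Finset.sum_const, nsmul_eq_mul] at h2
  calc (T.card : ℝ≥0∞) = 2 ^ (∑ i, j i) * ((T.card : ℝ≥0∞) * (2 ^ (∑ i, j i))⁻¹) := by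
        rw [mul_left_comm, ENNReal.mul_inv_cancel (by simp) (by simp), mul_one]
    _ ≤ _ := by gcongr

lemma bmoSq_le (d : ℕ) (f : (Fin d → ℝ) → ℝ) (U : Set (Fin d → ℝ)) (W : (Fin d → ℕ) → ℝ≥0∞)
    (hW : ∀ j m : Fin d → ℕ, (∀ i, m i < 2 ^ j i) →
      (2:ℝ≥0∞) ^ (∑ i, j i) * 2 ^ (∑ i, j i) *
        ENNReal.ofReal ((haarCoeff d f (fun i => (j i : ℤ)) m)^2) ≤ W j) :
    bmoSq d f U ≤ ∑' j, W j := by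
  classical
  unfold bmoSq
  have h : ∀ j : Fin d → ℕ, (∑ m ∈ Dfin0 d j,
    if dyadicBox d (fun i => (j i : ℤ)) m ⊆ U then
      (2:ℝ≥0∞) ^ (∑ i, j i) * ENNReal.ofReal ((haarCoeff d f (fun i => (j i : ℤ)) m)^2)
    else 0) ≤ volume U * W j := by
    intro j
    rw [← Finset.sum_filter]
    set P : ℝ≥0∞ := 2 ^ (∑ i, j i) with hP
    have hP0 : P ≠ 0 := by simp [hP]
    have hPt : P ≠ ⊤ := by simp [hP]
    have hterm : ∀ m ∈ (Dfin0 d j).filter (fun m => dyadicBox d (fun i => (j i : ℤ)) m ⊆ U),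
        P * ENNReal.ofReal ((haarCoeff d f (fun i => (j i : ℤ)) m)^2) ≤ P⁻¹ * W j := by
      intro m hm
      have hm1 := (Finset.mem_filter.1 hm).1
      have hm2 : ∀ i, m i < 2 ^ j i := by
        intro i
        have := Fintype.mem_piFinset.1 hm1 i
        simpa using this
      calc P * ENNReal.ofReal ((haarCoeff d f (fun i => (j i : ℤ)) m)^2)
          = P⁻¹ * (P * P * ENNReal.ofReal ((haarCoeff d f (fun i => (j i : ℤ)) m)^2)) := by
            rw [mul_assoc P, ← mul_assoc P⁻¹, ENNReal.inv_mul_cancel hP0 hPt, one_mul]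
        _ ≤ _ := by gcongr; exact hW j m hm2
    refine (Finset.sum_le_sum hterm).trans ?_
    rw [Finset.sum_const, nsmul_eq_mul]
    calc _ ≤ (P * volume U) * (P⁻¹ * W j) := by gcongr; exact box_card d j U _
      _ = (P * P⁻¹) * (volume U * W j) := by ring
      _ = _ := by rw [ENNReal.mul_inv_cancel hP0 hPt, one_mul]
  calc _ ≤ (volume U)⁻¹ * ∑' j, volume U * W j := by gcongr with j; exact h j
    _ = ((volume U)⁻¹ * volume U) * ∑' j, W j := by rw [ENNReal.tsum_mul_left, mul_assoc]
    _ ≤ 1 * ∑' j, W j := by gcongr; exact ENNReal.inv_mul_le_one _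
    _ = _ := one_mul _

lemma tsum_geom (d : ℕ) :
    ∑' j : Fin d → ℕ, ENNReal.ofReal ((1/2)^(∑ i, j i)) ≤ ENNReal.ofReal (2^d) := by
  rw [ENNReal.tsum_eq_iSup_sum]
  refine iSup_le fun s => ?_
  rw [← ENNReal.ofReal_sum_of_nonneg (fun _ _ => by positivity)]
  apply ENNReal.ofReal_le_ofReal
  set M := s.sup (fun j => ∑ i, j i) + 1 with hM
  have hsub : s ⊆ Fintype.piFinset (fun _ : Fin d => Finset.range M) := by
    intro j hj
    rw [Fintype.mem_piFinset]
    intro i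
    have h1 : j i ≤ ∑ i, j i := Finset.single_le_sum (fun _ _ => Nat.zero_le _) (Finset.mem_univ i)
    have h2 : (∑ i, j i) ≤ s.sup (fun j => ∑ i, j i) := Finset.le_sup (f := fun j => ∑ i, j i) hj
    exact Finset.mem_range.2 (by omega)
  refine (Finset.sum_le_sum_of_subset_of_nonneg hsub fun _ _ _ => by positivity).trans ?_
  simp only [← Finset.prod_pow_eq_pow_sum]
  rw [← Finset.prod_univ_sum (fun _ : Fin d => Finset.range M) (fun _ a => (1/2:ℝ)^a)]
  have hg : ∑ a ∈ Finset.range M, (1/2:ℝ)^a ≤ 2 := by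
    have : ∑ a ∈ Finset.range M, (1/2:ℝ)^a = 2 - 2 * (1/2)^M := by
      generalize M = K
      induction K with
      | zero => simp
      | succ K ih => rw [Finset.sum_range_succ, ih]; ring
    have h2 : (0:ℝ) < (1/2)^M := by positivity
    linarith
  calc _ ≤ ∏ _i : Fin d, (2:ℝ) :=
        Finset.prod_le_prod (fun _ _ => Finset.sum_nonneg fun _ _ => by positivity) fun _ _ => hg
    _ = 2 ^ d := by simp

lemma tsum_box (d L : ℕ) (c : ℝ≥0∞) :
    (∑' j : Fin d → ℕ, if ∀ i, j i < L then c else 0) = (L:ℝ≥0∞)^d * c := by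
  rw [tsum_eq_sum (s := Fintype.piFinset (fun _ : Fin d => Finset.range L))]
  · rw [Finset.sum_congr rfl (fun j hj => if_pos (fun i => by simpa using Fintype.mem_piFinset.1 hj i))]
    simp
  · intro j hj
    rw [if_neg]
    intro h
    exact hj (Fintype.mem_piFinset.2 fun i => Finset.mem_range.2 (h i))

/-- The weighted squared Haar coefficient bound. -/
lemma coeff_bound {d t : ℕ} {E : Fin d → ℕ → ℕ → ZMod 2} (hE : IsOrderSeq 2 t d E)
    (hT : Triangular2 d E) (N n : ℕ) (hN : 0 < N) (hNn : N ≤ 2 ^ n) (j m : Fin d → ℕ)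
    (hm : ∀ i, m i < 2 ^ j i) :
    (4:ℝ) ^ (∑ i, j i) * (haarCoeff d (discSeq d (digitalSeq d E) N) (fun i => (j i : ℤ)) m)^2 ≤
      (if ∀ i, j i < 2 * n then (((9 * 4 ^ d + 2) * 2 ^ t / (N:ℝ))^2 : ℝ) else (0:ℝ)) +
        (1 / (N:ℝ)^2) * (1/2)^(∑ i, j i) := by
  have hN' : (0:ℝ) < N := by exact_mod_cast hN
  rw [haarCoeff_disc d (digitalSeq d E) N hN j m hm]
  have hfk : ∀ k, ∏ i, gtent (2 ^ j i * digitalSeq d E k i - m i) = fk E j m k := fun _ => rfl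
  simp only [hfk]
  have hF := full_est hE hT j m hm N
  set J := ∑ i, j i with hJ
  set F := ∑ k ∈ Finset.range N, (fk E j m k - (1/2)^J * (1/4)^d) with hFdef
  have e4 : (4:ℝ)^J * ((1/2)^J)^2 = 1 := by
    rw [← pow_mul, mul_comm J 2, pow_mul, ← mul_pow]; norm_num
  have hsgn : (((-1:ℝ))^d)^2 = 1 := by rw [← pow_mul, mul_comm, pow_mul]; norm_num
  have e5 : (4:ℝ)^J * ((-1)^d * (1/2)^J * F / N)^2 = (F / N)^2 := by
    have : (4:ℝ)^J * ((-1)^d * (1/2)^J * F / N)^2 =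
      ((4:ℝ)^J * ((1/2)^J)^2) * (((-1:ℝ))^d)^2 * (F / N)^2 := by ring
    rw [this, e4, hsgn]; ring
  rw [e5]
  have hpos : 0 ≤ (1 / (N:ℝ)^2) * (1/2)^J := by positivity
  split_ifs with hj
  · have : (F / N)^2 ≤ (((9 * 4 ^ d + 2) * 2 ^ t / (N:ℝ))^2 : ℝ) := by
      rw [← sq_abs, abs_div, abs_of_pos hN']
      gcongr
    linarith
  · push Not at hj
    obtain ⟨i, hi⟩ := hj
    have hF2 : F = -(N * ((1/2)^J * (1/4)^d)) := by
      rw [hFdef, Finset.sum_congr rfl (fun k hk => by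
        rw [fk_zero E hT j m k n ((Finset.mem_range.1 hk).trans_le hNn) i hi])]
      simp
    have hJn : 2 * n ≤ J := hi.trans (Finset.single_le_sum (fun _ _ => Nat.zero_le _) (Finset.mem_univ i))
    have e6 : (F / N)^2 = (1/2)^J * (1/2)^J * ((1/4)^d)^2 := by
      rw [hF2]; field_simp
    have h1 : (((1:ℝ)/4)^d)^2 ≤ 1 := pow_le_one₀ (by positivity) (pow_le_one₀ (by norm_num) (by norm_num))
    have h2 : ((1:ℝ)/2)^J ≤ 1 / (N:ℝ)^2 := by
      have h3 : ((1:ℝ)/2)^J ≤ (1/2)^(2*n) := pow_le_pow_of_le_one (by norm_num) (by norm_num) hJn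
      have h4 : (N:ℝ)^2 ≤ 2^(2*n) := by
        have : (N:ℝ) ≤ 2 ^ n := by exact_mod_cast hNn
        rw [mul_comm 2 n, pow_mul]; gcongr
      refine h3.trans ?_
      rw [one_div_pow]
      exact one_div_le_one_div_of_le (by positivity) h4
    rw [e6, zero_add]
    calc (1/2:ℝ)^J * (1/2)^J * ((1/4)^d)^2 ≤ (1 / (N:ℝ)^2) * (1/2)^J * 1 := by gcongr
      _ = _ := mul_one _

lemma bmoSq_disc {d t : ℕ} {E : Fin d → ℕ → ℕ → ZMod 2} (hE : IsOrderSeq 2 t d E)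
    (hT : Triangular2 d E) (N n : ℕ) (hN : 0 < N) (hNn : N ≤ 2 ^ n) (U : Set (Fin d → ℝ)) :
    bmoSq d (discSeq d (digitalSeq d E) N) U ≤
      ENNReal.ofReal ((2 * n : ℝ)^d * ((9 * 4 ^ d + 2) * 2 ^ t / N)^2 + (1 / (N:ℝ)^2) * 2 ^ d) := by
  set c : ℝ := ((9 * 4 ^ d + 2) * 2 ^ t / N)^2 with hc
  have hc0 : 0 ≤ c := by positivity
  refine (bmoSq_le d _ U (fun j => (if ∀ i, j i < 2 * n then ENNReal.ofReal c else 0) +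
    ENNReal.ofReal (1 / (N:ℝ)^2) * ENNReal.ofReal ((1/2)^(∑ i, j i))) ?_).trans ?_
  · intro j m hm
    have h := coeff_bound hE hT N n hN hNn j m hm
    have e : (2:ℝ≥0∞) ^ (∑ i, j i) * 2 ^ (∑ i, j i) = ENNReal.ofReal (4 ^ (∑ i, j i)) := by
      rw [← mul_pow, ENNReal.ofReal_pow (by norm_num)]
      norm_num
    rw [e, ← ENNReal.ofReal_mul (by positivity)]
    refine (ENNReal.ofReal_le_ofReal h).trans ?_
    rw [ENNReal.ofReal_add (by split_ifs <;> positivity) (by positivity), ENNReal.ofReal_mul (p := 1 / (N:ℝ)^2) (by positivity)]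
    gcongr
    split_ifs
    · rfl
    · simp
  · rw [ENNReal.tsum_add, tsum_box, ENNReal.tsum_mul_left, ENNReal.ofReal_add (by positivity) (by positivity),
      ENNReal.ofReal_mul (p := 1 / (N:ℝ)^2) (by positivity), ENNReal.ofReal_mul (p := (2 * n : ℝ)^d) (by positivity)]
    gcongr
    · rw [ENNReal.ofReal_pow (by positivity)]
      gcongr
      rw [← ENNReal.ofReal_natCast]
      push_cast
      rfl
    · exact tsum_geom d

/-- For every order `2` digital `(t,d)`-sequence over `𝔽₂` whose generating
matrices satisfy `e_{i,k,ℓ} = 0` for `k > 2ℓ`, one has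
`‖D^N | bmo^d‖ ≤ C_d · 2^t · N⁻¹ (log N)^{d/2}` for all `N ≥ 2`. -/
theorem bmo_discrepancy_upper_bound (d : ℕ) (hd : 0 < d) :
    ∃ C : ℝ, 0 < C ∧ ∀ (t : ℕ) (E : Fin d → ℕ → ℕ → ZMod 2),
      IsOrderSeq 2 t d E → Triangular2 d E →
      ∀ N : ℕ, 2 ≤ N →
        bmoNorm d (discSeq d (digitalSeq d E) N) ≤
          ENNReal.ofReal (C * 2 ^ t * Real.log N ^ ((d:ℝ)/2) / N) := by
  set D : ℝ := 9 * 4 ^ d + 2 with hD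
  have hD0 : 0 < D := by positivity
  refine ⟨8 ^ d * (D + 1), by positivity, fun t E hE hT N hN => ?_⟩
  set n := Nat.log 2 N with hn
  have hN1 : N ≤ 2 ^ (n + 1) := (Nat.lt_pow_succ_log_self (by norm_num) N).le
  have hn1 : 1 ≤ n := Nat.log_pos (by norm_num) hN
  have hN0 : (0:ℝ) < N := by positivity
  have hln : (1/2 : ℝ) * n ≤ Real.log N := by
    have h1 : ((2 ^ n : ℕ) : ℝ) ≤ N := by exact_mod_cast Nat.pow_log_le_self 2 (by omega)
    have h2 := Real.log_le_log (by positivity) h1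
    rw [Nat.cast_pow, Real.log_pow] at h2
    have h3 := Real.log_two_gt_d9
    have h4 : (0:ℝ) ≤ n := Nat.cast_nonneg _
    push_cast at h2
    nlinarith
  have hn1r : (1:ℝ) ≤ n := by exact_mod_cast hn1
  set ℓ := Real.log N with hl
  have hl0 : 0 < ℓ := by linarith
  set X : ℝ := 8 ^ d * (D + 1) * 2 ^ t * ℓ ^ ((d:ℝ)/2) / N with hX
  have hX0 : 0 ≤ X := by positivity
  have hX2 : X ^ 2 = (8 ^ d * (D + 1)) ^ 2 * (2 ^ t) ^ 2 * ℓ ^ d / N ^ 2 := by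
    have : (ℓ ^ ((d:ℝ)/2)) ^ 2 = ℓ ^ d := by
      rw [← Real.rpow_natCast (ℓ ^ ((d:ℝ)/2)), ← Real.rpow_mul hl0.le, ← Real.rpow_natCast ℓ d]
      congr 1
      push_cast
      ring
    rw [hX, div_pow, mul_pow, mul_pow _ (2 ^ t : ℝ), this]
  have hmain : (2 * ((n + 1 : ℕ) : ℝ)) ^ d * (D * 2 ^ t / N) ^ 2 + 1 / (N:ℝ) ^ 2 * 2 ^ d ≤ X ^ 2 := by
    rw [hX2]
    have a1 : (2 * ((n + 1 : ℕ) : ℝ)) ^ d ≤ 8 ^ d * ℓ ^ d := by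
      rw [← mul_pow]
      refine pow_le_pow_left₀ (by positivity) ?_ d
      push_cast
      linarith
    have a2 : (2:ℝ) ^ d ≤ 8 ^ d * ℓ ^ d := by
      rw [← mul_pow]
      gcongr
      linarith
    have a3 : (1:ℝ) ≤ (2 ^ t) ^ 2 := one_le_pow₀ (one_le_pow₀ (by norm_num))
    have a4 : (1:ℝ) ≤ 8 ^ d := one_le_pow₀ (by norm_num)
    have e : (2 * ((n + 1 : ℕ) : ℝ)) ^ d * (D * 2 ^ t / N) ^ 2 + 1 / (N:ℝ) ^ 2 * 2 ^ d =
        ((2 * ((n + 1 : ℕ) : ℝ)) ^ d * (D ^ 2 * (2 ^ t) ^ 2) + 2 ^ d) / N ^ 2 := by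
      field_simp
    rw [e]
    gcongr
    set T : ℝ := (2 ^ t) ^ 2 with hT'
    set Q : ℝ := 8 ^ d * ℓ ^ d with hQ
    have hQ0 : 0 < Q := by positivity
    calc (2 * ((n + 1 : ℕ) : ℝ)) ^ d * (D ^ 2 * T) + 2 ^ d ≤ Q * (D ^ 2 * T) + Q * T := by
          have : Q ≤ Q * T := le_mul_of_one_le_right hQ0.le a3
          have h5 : (2 * ((n + 1 : ℕ) : ℝ)) ^ d * (D ^ 2 * T) ≤ Q * (D ^ 2 * T) := by gcongr
          linarith
      _ = (D ^ 2 + 1) * (Q * T) := by ring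
      _ ≤ (D + 1) ^ 2 * (Q * T) := by gcongr; nlinarith
      _ ≤ (8 ^ d) * ((D + 1) ^ 2 * (Q * T)) := le_mul_of_one_le_left (by positivity) a4
      _ = _ := by rw [hQ]; ring
  unfold bmoNorm
  have hsup : (⨆ U : {U : Set (Fin d → ℝ) // MeasurableSet U ∧ U ⊆ unitCubeIco d ∧ 0 < volume U},
      bmoSq d (discSeq d (digitalSeq d E) N) U.1) ≤ ENNReal.ofReal X ^ (2:ℝ) := by
    refine iSup_le fun U => ?_
    refine (bmoSq_disc hE hT N (n + 1) (by omega) hN1 U.1).trans ?_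
    rw [ENNReal.ofReal_rpow_of_nonneg hX0 (by norm_num)]
    apply ENNReal.ofReal_le_ofReal
    rw [Real.rpow_two]
    exact hmain
  calc _ ≤ (ENNReal.ofReal X ^ (2:ℝ)) ^ (1/2 : ℝ) := ENNReal.rpow_le_rpow hsup (by norm_num)
    _ = ENNReal.ofReal X := by rw [← ENNReal.rpow_mul]; norm_num

end
end
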